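/- arXiv:1206.1100 — 3 statements merged into one kernel-verified Lean document; each statement's English description precedes it below -/
import Mathlib

section
/- For every integer a ≥ 1 and every real y > √D/(2a), one has ∫_{−∞}^{∞} (a(w+iy)² − D/(4a))^{k−1} · φ( arctan( √D·y / (a(w²+y²) − D/(4a)) ) ) dw = (−1)^{k+1} · D^{k−1/2} · π / (a^k · 2^{2k−2} · (2k−1)). -/
noncomputable section

open MeasureTheory

/-- The set of integral binary quadratic forms `[a,b,c]` of discriminant `D`. -/
def QD (D : ℤ) : Set (ℤ × ℤ × ℤ) := {q | q.2.1 ^ 2 - 4 * q.1 * q.2.2 = D}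

/-- `Q(τ,1) = a τ² + b τ + c`. -/
def Qval (q : ℤ × ℤ × ℤ) (τ : ℂ) : ℂ :=
  (q.1 : ℂ) * τ ^ 2 + (q.2.1 : ℂ) * τ + (q.2.2 : ℂ)

/-- `a|τ|² + b x + c` where `τ = x + iy`. -/
def Qell (q : ℤ × ℤ × ℤ) (τ : ℂ) : ℝ :=
  (q.1 : ℝ) * Complex.normSq τ + (q.2.1 : ℝ) * τ.re + (q.2.2 : ℝ)

/-- `ψ(v) = (1/2) ∫₀ᵛ u^(k-3/2) (1-u)^(-1/2) du`. -/
def psi (k : ℕ) (v : ℝ) : ℝ :=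
  (1 / 2) * ∫ u in (0:ℝ)..v, u ^ ((k : ℝ) - 3 / 2) * (1 - u) ^ (-(1:ℝ) / 2)

/-- real power of the integer `D`, as a complex number. -/
def Dpow (D : ℤ) (e : ℝ) : ℂ := (((D : ℝ) ^ e : ℝ) : ℂ)

/-- The summand of the series defining `F_{1-k,D}`. -/
def Fsummand (k : ℕ) (D : ℤ) (τ : ℂ) (q : ℤ × ℤ × ℤ) : ℂ :=
  ((Real.sign (Qell q τ) : ℝ) : ℂ) * Qval q τ ^ (k - 1) *
    ((psi k ((D : ℝ) * τ.im ^ 2 / Complex.normSq (Qval q τ)) : ℝ) : ℂ)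

/-- `F_{1-k,D}`. -/
def F (k : ℕ) (D : ℤ) (τ : ℂ) : ℂ :=
  (Dpow D (1 / 2 - (k : ℝ)) / (((Nat.choose (2 * k - 2) (k - 1) : ℝ) * Real.pi : ℝ) : ℂ)) *
    ∑' q : QD D, Fsummand k D τ (q : ℤ × ℤ × ℤ)

/-- `f_{k,D}`. -/
def fkD (k : ℕ) (D : ℤ) (τ : ℂ) : ℂ :=
  (Dpow D ((k : ℝ) - 1 / 2) / (((Nat.choose (2 * k - 2) (k - 1) : ℝ) * Real.pi : ℝ) : ℂ)) *
    ∑' q : QD D, Qval (q : ℤ × ℤ × ℤ) τ ^ (-(k : ℤ))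

/-- Action of `SL₂(ℤ)` on binary quadratic forms: `(Q ∘ γ)(X,Y) = Q(pX+qY, rX+sY)`. -/
def QAct (q : ℤ × ℤ × ℤ) (γ : Matrix.SpecialLinearGroup (Fin 2) ℤ) : ℤ × ℤ × ℤ :=
  (q.1 * (γ.1 0 0) ^ 2 + q.2.1 * (γ.1 0 0) * (γ.1 1 0) + q.2.2 * (γ.1 1 0) ^ 2,
   2 * q.1 * (γ.1 0 0) * (γ.1 0 1) + q.2.1 * ((γ.1 0 0) * (γ.1 1 1) + (γ.1 0 1) * (γ.1 1 0))
     + 2 * q.2.2 * (γ.1 1 0) * (γ.1 1 1),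
   q.1 * (γ.1 0 1) ^ 2 + q.2.1 * (γ.1 0 1) * (γ.1 1 1) + q.2.2 * (γ.1 1 1) ^ 2)

/-- A narrow class: an orbit of the `SL₂(ℤ)`-action on `QD D`. -/
def IsNarrowClass (D : ℤ) (𝒜 : Set (ℤ × ℤ × ℤ)) : Prop :=
  ∃ q₀ ∈ QD D, 𝒜 = {q | ∃ γ : Matrix.SpecialLinearGroup (Fin 2) ℤ, QAct q₀ γ = q}

/-- `F_{1-k,D,𝒜}`. -/
def FA (k : ℕ) (D : ℤ) (𝒜 : Set (ℤ × ℤ × ℤ)) (τ : ℂ) : ℂ :=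
  ((-1 : ℂ) ^ k * Dpow D (1 / 2 - (k : ℝ)) /
      (((Nat.choose (2 * k - 2) (k - 1) : ℝ) * Real.pi : ℝ) : ℂ)) *
    ∑' q : 𝒜, Fsummand k D τ (q : ℤ × ℤ × ℤ)

/-- `f_{k,D,𝒜}`. -/
def fA (k : ℕ) (D : ℤ) (𝒜 : Set (ℤ × ℤ × ℤ)) (τ : ℂ) : ℂ :=
  ((-1 : ℂ) ^ k * Dpow D ((k : ℝ) - 1 / 2) /
      (((Nat.choose (2 * k - 2) (k - 1) : ℝ) * Real.pi : ℝ) : ℂ)) *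
    ∑' q : 𝒜, Qval (q : ℤ × ℤ × ℤ) τ ^ (-(k : ℤ))

/-- Partial derivative in the real direction `x`. -/
def dxx (G : ℂ → ℂ) (τ : ℂ) : ℂ :=
  deriv (fun x : ℝ => G ((x : ℂ) + (τ.im : ℂ) * Complex.I)) τ.re

/-- Partial derivative in the imaginary direction `y`. -/
def dyy (G : ℂ → ℂ) (τ : ℂ) : ℂ :=
  deriv (fun y : ℝ => G ((τ.re : ℂ) + (y : ℂ) * Complex.I)) τ.im

/-- Wirtinger derivative `∂/∂τ̄ = (1/2)(∂/∂x + i ∂/∂y)`. -/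
def wirDbar (G : ℂ → ℂ) (τ : ℂ) : ℂ := (dxx G τ + Complex.I * dyy G τ) / 2

/-- Wirtinger derivative `∂/∂τ = (1/2)(∂/∂x - i ∂/∂y)`. -/
def wirD (G : ℂ → ℂ) (τ : ℂ) : ℂ := (dxx G τ - Complex.I * dyy G τ) / 2

/-- The operator `ξ_{2-2k}(G)(τ) = 2 i y^{2-2k} conj(∂G/∂τ̄)`. -/
def xiOp (k : ℕ) (G : ℂ → ℂ) (τ : ℂ) : ℂ :=
  2 * Complex.I * (τ.im : ℂ) ^ ((2 : ℤ) - 2 * (k : ℤ)) * (starRingEnd ℂ) (wirDbar G τ)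

/-- The operator `𝒟 = (1/(2πi)) ∂/∂τ`. -/
def Dop (G : ℂ → ℂ) : ℂ → ℂ := fun τ => (1 / (2 * (Real.pi : ℂ) * Complex.I)) * wirD G τ

/-- The weight `2-2k` hyperbolic Laplacian. -/
def DeltaOp (k : ℕ) (G : ℂ → ℂ) (τ : ℂ) : ℂ :=
  -(τ.im : ℂ) ^ 2 * (dxx (fun z => dxx G z) τ + dyy (fun z => dyy G z) τ)
    + Complex.I * ((2 : ℂ) - 2 * (k : ℂ)) * (τ.im : ℂ) * (dxx G τ + Complex.I * dyy G τ)

/-- `φ(v) = ∫₀ᵛ sin(u)^{2k-2} du`. -/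
def phi (k : ℕ) (v : ℝ) : ℝ := ∫ u in (0:ℝ)..v, Real.sin u ^ (2 * k - 2)

/-- `φ̂(τ) = τ^{k-1} sgn(x) φ(arctan|y/x|)`, with value `0` when `x = 0`. -/
def phiHat (k : ℕ) (τ : ℂ) : ℂ :=
  τ ^ (k - 1) * ((Real.sign τ.re : ℝ) : ℂ) *
    ((phi k (Real.arctan |τ.im / τ.re|) : ℝ) : ℂ)

/-- The non-holomorphic Eichler integral
`f^*(τ) = (2i)^{1-2k} ∫_{-τ̄}^{i∞} conj(f(-z̄)) (z+τ)^{2k-2} dz`,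
parametrized along the vertical path `z = -τ̄ + it`, `t ∈ (0,∞)`. -/
def fstar (k : ℕ) (f : ℂ → ℂ) (τ : ℂ) : ℂ :=
  (2 * Complex.I) ^ ((1 : ℤ) - 2 * (k : ℤ)) * Complex.I *
    ∫ t in Set.Ioi (0 : ℝ), (starRingEnd ℂ) (f (τ + (t : ℂ) * Complex.I)) *
      (((2 * τ.im + t : ℝ) : ℂ) * Complex.I) ^ (2 * k - 2)

/-- `a : ℕ → ℂ` is the sequence of Fourier coefficients of `f` (with `a n` the
coefficient of `e^{2πi(n+1)τ}`). -/
def HasFourier (a : ℕ → ℂ) (f : ℂ → ℂ) : Prop :=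
  ∀ τ : ℂ, 0 < τ.im →
    f τ = ∑' n : ℕ, a n * Complex.exp (2 * (Real.pi : ℂ) * Complex.I * ((n : ℂ) + 1) * τ)

/-- The holomorphic Eichler integral `ℰ_f(τ) = ∑_{n≥1} (a_n/n^{2k-1}) e^{2πinτ}`. -/
def EichlerE (k : ℕ) (a : ℕ → ℂ) (τ : ℂ) : ℂ :=
  ∑' n : ℕ, a n / ((n : ℂ) + 1) ^ (2 * k - 1) *
    Complex.exp (2 * (Real.pi : ℂ) * Complex.I * ((n : ℂ) + 1) * τ)

/-- `r_{a,b}(𝒜) = 1_{[Q_{a,b} ∈ 𝒜]} + (-1)^k 1_{[-Q_{a,b} ∈ 𝒜]}`. -/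
def rab (k : ℕ) (D : ℤ) (𝒜 : Set (ℤ × ℤ × ℤ)) (a b : ℤ) : ℝ :=
  Set.indicator 𝒜 1 (a, b, (b ^ 2 - D) / (4 * a)) +
    (-1 : ℝ) ^ k * Set.indicator 𝒜 1 (-a, -b, -((b ^ 2 - D) / (4 * a)))

/-- The constant `c_∞(𝒜)`. -/
def cInftyA (k : ℕ) (D : ℤ) (𝒜 : Set (ℤ × ℤ × ℤ)) : ℝ :=
  -(1 / (2 ^ (2 * k - 2) * (2 * (k : ℝ) - 1) * (Nat.choose (2 * k - 2) (k - 1) : ℝ))) *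
    ∑' n : ℕ, (1 / ((n : ℝ) + 1) ^ k) *
      ∑ b ∈ Finset.range (2 * (n + 1)),
        if (4 * ((n : ℤ) + 1)) ∣ ((b : ℤ) ^ 2 - D) then rab k D 𝒜 ((n : ℤ) + 1) (b : ℤ) else 0

/-- The constant `c_∞`. -/
def cInfty (k : ℕ) (D : ℤ) : ℝ :=
  -(1 / (2 ^ (2 * k - 3) * (2 * (k : ℝ) - 1) * (Nat.choose (2 * k - 2) (k - 1) : ℝ))) *
    ∑' n : ℕ, (1 / ((n : ℝ) + 1) ^ k) *
      (((Finset.range (2 * (n + 1))).filter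
        (fun b : ℕ => (4 * ((n : ℤ) + 1)) ∣ ((b : ℤ) ^ 2 - D))).card : ℝ)

/-- The weight `2-2k` Hecke operator `T_p`. -/
def heckeT (k : ℕ) (p : ℕ) (g : ℂ → ℂ) (τ : ℂ) : ℂ :=
  (p : ℂ) ^ ((1 : ℤ) - 2 * (k : ℤ)) * g ((p : ℂ) * τ) +
    (p : ℂ)⁻¹ * ∑ r ∈ Finset.range p, g ((τ + (r : ℂ)) / (p : ℂ))

open scoped Classical in
/-- The symbol `(D|p)`. -/
def legSym (D : ℤ) (p : ℕ) : ℤ :=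
  if (p : ℤ) ∣ D then 0
  else if p = 2 then (if D % 8 = 1 ∨ D % 8 = 7 then 1 else -1)
  else if ∃ m : ℤ, (p : ℤ) ∣ (m ^ 2 - D) then 1 else -1

/-- Primitive forms of discriminant `D`. -/
def QDprim (D : ℤ) : Set (ℤ × ℤ × ℤ) :=
  {q | q.2.1 ^ 2 - 4 * q.1 * q.2.2 = D ∧ Int.gcd q.1 (Int.gcd q.2.1 q.2.2) = 1}

/-- `F'_{1-k,D}`: the sum over primitive forms, with normalization `D^{(1-k)/2}`. -/
def Fprim (k : ℕ) (D : ℤ) (τ : ℂ) : ℂ :=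
  (Dpow D ((1 - (k : ℝ)) / 2) / (((Nat.choose (2 * k - 2) (k - 1) : ℝ) * Real.pi : ℝ) : ℂ)) *
    ∑' q : QDprim D, Fsummand k D τ (q : ℤ × ℤ × ℤ)

/-- The root `η_Q = (-b+√D)/(2a)`. -/
def etaQ (D : ℤ) (q : ℤ × ℤ × ℤ) : ℝ := (-(q.2.1 : ℝ) + Real.sqrt (D : ℝ)) / (2 * (q.1 : ℝ))

/-- The root `η'_Q = (-b-√D)/(2a)`. -/
def etaQ' (D : ℤ) (q : ℤ × ℤ × ℤ) : ℝ := (-(q.2.1 : ℝ) - Real.sqrt (D : ℝ)) / (2 * (q.1 : ℝ))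

/-- The scaling matrix `A_Q`. -/
def AQ (D : ℤ) (q : ℤ × ℤ × ℤ) : Matrix (Fin 2) (Fin 2) ℝ :=
  (1 / Real.sqrt |etaQ D q - etaQ' D q|) •
    !![1, -(etaQ' D q);
       -(Real.sign (etaQ D q - etaQ' D q)), Real.sign (etaQ D q - etaQ' D q) * etaQ D q]

/-- Real matrix associated to an element of `SL₂(ℤ)`. -/
def toR (γ : Matrix.SpecialLinearGroup (Fin 2) ℤ) : Matrix (Fin 2) (Fin 2) ℝ :=
  γ.1.map (fun n => (n : ℝ))

/-- Möbius action of a real `2×2` matrix on `ℂ`. -/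
def moeb (g : Matrix (Fin 2) (Fin 2) ℝ) (τ : ℂ) : ℂ :=
  ((g 0 0 : ℝ) * τ + (g 0 1 : ℝ)) / ((g 1 0 : ℝ) * τ + (g 1 1 : ℝ))

/-- Automorphy factor `j(g,τ) = cτ + d`. -/
def jfac (g : Matrix (Fin 2) (Fin 2) ℝ) (τ : ℂ) : ℂ :=
  ((g 1 0 : ℝ) : ℂ) * τ + ((g 1 1 : ℝ) : ℂ)

/-- `n`-th period `r_n(f) = ∫₀^∞ f(it) tⁿ dt`. -/
def periodR (f : ℂ → ℂ) (n : ℕ) : ℂ :=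
  ∫ t in Set.Ioi (0 : ℝ), f ((t : ℂ) * Complex.I) * (t : ℂ) ^ n

/-- The even period polynomial `r⁺(f;X)`. -/
def rPlus (k : ℕ) (f : ℂ → ℂ) : Polynomial ℂ :=
  ∑ m ∈ Finset.range k,
    Polynomial.C ((-1 : ℂ) ^ m * (Nat.choose (2 * k - 2) (2 * m) : ℂ) * periodR f (2 * m)) *
      Polynomial.X ^ (2 * k - 2 - 2 * m)

end


open MeasureTheory

theorem aux_const (s : ℝ) (F Fw R : ℝ → ℝ → ℂ) (c : ℂ)
    (hw : ∀ y, s < y → ∀ w, HasDerivAt (F y) (Fw y w) w)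
    (hy : ∀ y, s < y → ∀ w, HasDerivAt (fun y => F y w) (c * Fw y w + R y w) y)
    (hb : ∀ y1 y2, s < y1 → ∃ C, ∀ y ∈ Set.Icc y1 y2, ∀ w : ℝ,
      ‖F y w‖ ≤ C * (1 + w ^ 2)⁻¹ ∧ ‖Fw y w‖ ≤ C * (1 + w ^ 2)⁻¹ ∧
      ‖R y w‖ ≤ C * (1 + w ^ 2)⁻¹)
    (hRm : ∀ y, s < y → Continuous (R y)) (hR0 : ∀ y, s < y → ∫ w, R y w = 0)
    (y y' : ℝ) (h1 : s < y) (h2 : s < y') : ∫ w, F y w = ∫ w, F y' w := by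
  have hFc : ∀ y, s < y → Continuous (F y) := fun y h =>
    continuous_iff_continuousAt.2 fun w => (hw y h w).continuousAt
  have hFwm : ∀ y, s < y → AEStronglyMeasurable (Fw y) volume := by
    intro y h
    have : Fw y = deriv (F y) := funext fun w => (hw y h w).deriv.symm
    rw [this]
    exact (stronglyMeasurable_deriv (F y)).aestronglyMeasurable
  have hI : ∀ y, s < y → Integrable (F y) ∧ Integrable (Fw y) ∧ Integrable (R y) := by
    intro y h
    obtain ⟨C, hC⟩ := hb y y h
    have hC' := hC y ⟨le_rfl, le_rfl⟩
    have hi : Integrable (fun w : ℝ => C * (1 + w ^ 2)⁻¹) := integrable_inv_one_add_sq.const_mul C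
    exact ⟨hi.mono' (hFc y h).aestronglyMeasurable (.of_forall fun w => (hC' w).1),
      hi.mono' (hFwm y h) (.of_forall fun w => (hC' w).2.1),
      hi.mono' (hRm y h).aestronglyMeasurable (.of_forall fun w => (hC' w).2.2)⟩
  have key : ∀ y, s < y → HasDerivAt (fun y => ∫ w, F y w) 0 y := by
    intro y h
    obtain ⟨C, hC⟩ := hb ((s + y) / 2) (y + 1) (by linarith)
    have := (hasDerivAt_integral_of_dominated_loc_of_deriv_le (μ := volume) (𝕜 := ℝ)
      (bound := fun w : ℝ => (‖c‖ * C + C) * (1 + w ^ 2)⁻¹)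
      (F := F) (F' := fun y w => c * Fw y w + R y w) (x₀ := y)
      (s := Set.Ioo ((s + y) / 2) (y + 1)) (Ioo_mem_nhds (by linarith) (by linarith))
      ?_ (hI y h).1 ?_ ?_ ?_ ?_).2
    · rw [integral_add ((hI y h).2.1.const_mul c) (hI y h).2.2, integral_const_mul, hR0 y h,
        integral_eq_zero_of_hasDerivAt_of_integrable (hw y h) (hI y h).2.1 (hI y h).1] at this
      simpa using this
    · filter_upwards [lt_mem_nhds h] with z hz
      exact (hFc z hz).aestronglyMeasurable
    · exact ((hFwm y h).const_mul c).add (hRm y h).aestronglyMeasurable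
    · refine .of_forall fun w z hz => ?_
      obtain ⟨-, e1, e2⟩ := hC z ⟨hz.1.le, hz.2.le⟩ w
      calc ‖c * Fw z w + R z w‖ ≤ ‖c‖ * ‖Fw z w‖ + ‖R z w‖ := by
            rw [← norm_mul]; exact norm_add_le _ _
        _ ≤ ‖c‖ * (C * (1 + w ^ 2)⁻¹) + C * (1 + w ^ 2)⁻¹ := by gcongr
        _ = _ := by ring
    · exact integrable_inv_one_add_sq.const_mul _
    · refine .of_forall fun w z hz => hy z ?_ w
      have := hz.1
      linarith
  exact isOpen_Ioi.is_const_of_deriv_eq_zero (s := Set.Ioi s) (𝕜 := ℝ)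
    (f := fun y => ∫ w, F y w) isPreconnected_Ioi
    (fun y h => (key y h).differentiableAt.differentiableWithinAt)
    (fun y h => (key y h).deriv) h1 h2

/-- `τ² - s²` with `τ = w + iy`. -/
noncomputable def qq (s y w : ℝ) : ℂ := ((w : ℂ) + (y : ℂ) * Complex.I) ^ 2 - (s : ℂ) ^ 2

theorem qq_mul (s y w : ℝ) : qq s y w * qq s (-y) w =
    (((w ^ 2 + y ^ 2 - s ^ 2) ^ 2 + (2 * s * y) ^ 2 : ℝ) : ℂ) := by
  apply Complex.ext <;> simp [qq, pow_two] <;> ring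

theorem qq_normSq (s y w : ℝ) : ‖qq s y w‖ ^ 2 =
    (w ^ 2 + y ^ 2 - s ^ 2) ^ 2 + (2 * s * y) ^ 2 := by
  rw [← Complex.normSq_eq_norm_sq, Complex.normSq_apply]
  simp [qq, pow_two]; ring

theorem qq_norm_neg (s y w : ℝ) : ‖qq s (-y) w‖ = ‖qq s y w‖ := by
  rw [← sq_eq_sq₀ (norm_nonneg _) (norm_nonneg _), qq_normSq, qq_normSq]; ring

theorem qq_ge (s y w : ℝ) : w ^ 2 + y ^ 2 - s ^ 2 ≤ ‖qq s y w‖ := by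
  refine le_of_sq_le_sq ?_ (norm_nonneg _)
  rw [qq_normSq]; nlinarith [sq_nonneg (2 * s * y)]

theorem qq_le (s y w : ℝ) : ‖qq s y w‖ ≤ w ^ 2 + y ^ 2 + s ^ 2 := by
  refine le_of_sq_le_sq ?_ (by positivity)
  rw [qq_normSq]; nlinarith [sq_nonneg (s * w)]

theorem qq_pos {s y : ℝ} (hs : 0 ≤ s) (h : s < y) (w : ℝ) : 0 < w ^ 2 + y ^ 2 - s ^ 2 := by
  nlinarith [sq_nonneg w]

theorem qq_ne {s y : ℝ} (hs : 0 ≤ s) (h : s < y) (w : ℝ) : qq s y w ≠ 0 :=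
  norm_pos_iff.1 ((qq_pos hs h w).trans_le (qq_ge s y w))

theorem qq_ne' {s y : ℝ} (hs : 0 ≤ s) (h : s < y) (w : ℝ) : qq s (-y) w ≠ 0 := by
  rw [← norm_pos_iff, qq_norm_neg]
  exact (qq_pos hs h w).trans_le (qq_ge s y w)

theorem qq_hasDeriv_w (s y w : ℝ) :
    HasDerivAt (qq s y) (2 * ((w : ℂ) + (y : ℂ) * Complex.I)) w := by
  have := ((((hasDerivAt_id (w : ℂ)).add_const ((y : ℂ) * Complex.I)).pow 2).sub_const
    ((s : ℂ) ^ 2)).comp_ofReal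
  change HasDerivAt (fun w : ℝ => ((w : ℂ) + (y : ℂ) * Complex.I) ^ 2 - (s : ℂ) ^ 2) _ w
  refine HasDerivAt.congr_deriv this ?_
  simp

theorem qq_hasDeriv_y (s y w : ℝ) :
    HasDerivAt (fun y => qq s y w) (2 * ((w : ℂ) + (y : ℂ) * Complex.I) * Complex.I) y := by
  have := (((((hasDerivAt_id (y : ℂ)).mul_const Complex.I).const_add (w : ℂ)).pow 2).sub_const
    ((s : ℂ) ^ 2)).comp_ofReal
  simpa [qq, Function.comp_def] using this

theorem qq_hasDeriv_y' (s y w : ℝ) :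
    HasDerivAt (fun y => qq s (-y) w) (-(2 * ((w : ℂ) - (y : ℂ) * Complex.I) * Complex.I)) y := by
  have := (qq_hasDeriv_y s (-y) w).scomp y (hasDerivAt_neg y)
  refine HasDerivAt.congr_deriv this ?_
  push_cast [neg_smul, one_smul]; ring

theorem aux_bounds {s : ℝ} (hs : 0 < s) (y1 y2 : ℝ) (h : s < y1) :
    ∃ K : ℝ, 1 ≤ K ∧ ∀ y ∈ Set.Icc y1 y2, ∀ w : ℝ,
      ‖qq s y w‖ ≤ K * (1 + w ^ 2) ∧ ‖(w : ℂ) + (y : ℂ) * Complex.I‖ ≤ K * (1 + w ^ 2) ∧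
      2 * s * y ≤ K ∧ (w ^ 2 + y ^ 2 - s ^ 2)⁻¹ ≤ K * (1 + w ^ 2)⁻¹ ∧
      ‖qq s y w‖⁻¹ ≤ K * (1 + w ^ 2)⁻¹ := by
  have hd : 0 < y1 ^ 2 - s ^ 2 := by nlinarith
  refine ⟨1 + y2 ^ 2 + s ^ 2 + (y1 ^ 2 - s ^ 2)⁻¹, ?_, ?_⟩
  · have := inv_pos.2 hd; nlinarith [sq_nonneg y2, sq_nonneg s]
  intro y hy w
  obtain ⟨hy1, hy2⟩ := hy
  have hi := inv_pos.2 hd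
  set d := (y1 ^ 2 - s ^ 2)⁻¹ with hdd
  have hdm : d * (y1 ^ 2 - s ^ 2) = 1 := inv_mul_cancel₀ hd.ne'
  have hyy : y ^ 2 ≤ y2 ^ 2 := by nlinarith
  have hyy1 : y1 ^ 2 ≤ y ^ 2 := by nlinarith
  have hM := qq_pos hs.le (h.trans_le hy1) w
  have hMi : (w ^ 2 + y ^ 2 - s ^ 2)⁻¹ ≤ (1 + y2 ^ 2 + s ^ 2 + d) * (1 + w ^ 2)⁻¹ := by
    rw [← div_eq_mul_inv, inv_eq_one_div, div_le_div_iff₀ hM (by positivity)]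
    have e1 : 1 ≤ d * (y ^ 2 - s ^ 2) := by
      rw [← hdm]; gcongr
    have e2 : w ^ 2 ≤ w ^ 2 + y ^ 2 - s ^ 2 := by nlinarith
    have e3 : 0 ≤ (y2 ^ 2 + s ^ 2) * (w ^ 2 + y ^ 2 - s ^ 2) := by positivity
    have e4 : 0 ≤ d * w ^ 2 := by positivity
    nlinarith
  refine ⟨?_, ?_, ?_, hMi, ?_⟩
  · refine (qq_le s y w).trans ?_
    nlinarith [mul_nonneg (sq_nonneg w) (sq_nonneg y2), mul_nonneg (sq_nonneg w) (sq_nonneg s),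
      mul_nonneg (sq_nonneg w) hi.le]
  · have : ‖(w : ℂ) + (y : ℂ) * Complex.I‖ ≤ |w| + |y| := by
      refine (norm_add_le _ _).trans ?_
      simp
    refine this.trans ?_
    rw [abs_of_pos (hs.trans (h.trans_le hy1))]
    have e1 : 2 * |w| ≤ 1 + w ^ 2 := by nlinarith [sq_nonneg (|w| - 1), sq_abs w]
    have e2 : 2 * y ≤ 1 + y ^ 2 := by nlinarith [sq_nonneg (y - 1)]
    nlinarith [mul_nonneg (sq_nonneg w) (sq_nonneg y2), mul_nonneg (sq_nonneg w) (sq_nonneg s),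
      mul_nonneg (sq_nonneg w) hi.le]
  · nlinarith [sq_nonneg (s - y)]
  · refine le_trans ?_ hMi
    exact inv_anti₀ hM (qq_ge s y w)

theorem aux_u (w : ℝ) : 0 < (1 + w ^ 2)⁻¹ ∧ (1 + w ^ 2)⁻¹ ≤ 1 ∧
    (1 + w ^ 2) * (1 + w ^ 2)⁻¹ = 1 := by
  have h : 0 < 1 + w ^ 2 := by positivity
  exact ⟨inv_pos.2 h, inv_le_one_of_one_le₀ (by nlinarith [sq_nonneg w]), mul_inv_cancel₀ h.ne'⟩

theorem aux_tau_neg (w y : ℝ) :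
    ‖(w : ℂ) - (y : ℂ) * Complex.I‖ = ‖(w : ℂ) + (y : ℂ) * Complex.I‖ := by
  rw [← Complex.norm_conj]
  simp

theorem aux_zero_const {s : ℝ} (hs : 0 < s) (n : ℕ) (y y' : ℝ) (h1 : s < y) (h2 : s < y') :
    ∫ w, (qq s (-y) w)⁻¹ ^ (n + 2) = ∫ w, (qq s (-y') w)⁻¹ ^ (n + 2) := by
  refine aux_const s (fun y w => (qq s (-y) w)⁻¹ ^ (n + 2))
    (fun y w => (n + 2 : ℂ) * (qq s (-y) w)⁻¹ ^ (n + 1) *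
      (-(2 * ((w : ℂ) - (y : ℂ) * Complex.I)) * (qq s (-y) w)⁻¹ ^ 2)) (fun _ _ => 0)
    (-Complex.I) ?_ ?_ ?_ ?_ ?_ y y' h1 h2
  · intro y h w
    have := ((qq_hasDeriv_w s (-y) w).fun_inv (qq_ne' hs.le h w)).fun_pow (n + 2)
    refine HasDerivAt.congr_deriv this ?_
    push_cast [div_eq_mul_inv, inv_pow]
    ring
  · intro y h w
    have := ((qq_hasDeriv_y' s y w).fun_inv (qq_ne' hs.le h w)).fun_pow (n + 2)
    refine HasDerivAt.congr_deriv this ?_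
    push_cast [div_eq_mul_inv, inv_pow]
    ring
  · intro y1 y2 h
    obtain ⟨K, hK1, hK⟩ := aux_bounds hs y1 y2 h
    refine ⟨K ^ (n + 2) + (n + 2) * 2 * K ^ (n + 4), fun y hy w => ?_⟩
    obtain ⟨b1, b2, b3, b4, b5⟩ := hK y hy w
    obtain ⟨u0, u1, u2⟩ := aux_u w
    set u := (1 + w ^ 2)⁻¹
    have hK0 : 0 < K := by linarith
    refine ⟨?_, ?_, ?_⟩
    · rw [norm_pow, norm_inv, qq_norm_neg]
      calc ‖qq s y w‖⁻¹ ^ (n + 2) ≤ (K * u) ^ (n + 2) := by gcongr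
        _ = K ^ (n + 2) * u ^ (n + 2) := by ring
        _ ≤ K ^ (n + 2) * u := by gcongr; exact pow_le_of_le_one u0.le u1 (by omega)
        _ ≤ _ := by gcongr; exact le_add_of_nonneg_right (by positivity)
    · simp only [norm_mul, norm_pow, norm_inv, norm_neg, qq_norm_neg, aux_tau_neg]
      have e : ‖(n + 2 : ℂ)‖ = (n + 2 : ℝ) := by
        have : (n + 2 : ℂ) = ((n + 2 : ℕ) : ℂ) := by push_cast; ring
        rw [this, Complex.norm_natCast]; push_cast; ring
      rw [e, Complex.norm_two]
      calc (n + 2 : ℝ) * ‖qq s y w‖⁻¹ ^ (n + 1) *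
            (2 * ‖(w : ℂ) + (y : ℂ) * Complex.I‖ * ‖qq s y w‖⁻¹ ^ 2)
          ≤ (n + 2 : ℝ) * (K * u) ^ (n + 1) * (2 * (K * (1 + w ^ 2)) * (K * u) ^ 2) := by gcongr
        _ = (n + 2 : ℝ) * 2 * K ^ (n + 4) * u ^ (n + 2) * ((1 + w ^ 2) * u) := by ring
        _ = (n + 2 : ℝ) * 2 * K ^ (n + 4) * u ^ (n + 2) := by rw [u2, mul_one]
        _ ≤ (n + 2 : ℝ) * 2 * K ^ (n + 4) * u := by
            gcongr; exact pow_le_of_le_one u0.le u1 (by omega)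
        _ ≤ _ := by gcongr; exact le_add_of_nonneg_left (by positivity)
    · simp only [norm_zero]; positivity
  · intro y _; exact continuous_const
  · simp

theorem aux_zero {s : ℝ} (hs : 0 < s) (n : ℕ) (y : ℝ) (h1 : s < y) :
    ∫ w, (qq s (-y) w)⁻¹ ^ (n + 2) = 0 := by
  have hb : ∀ Y : ℝ, s + 1 < Y →
      ‖∫ w, (qq s (-y) w)⁻¹ ^ (n + 2)‖ ≤ (Y ^ 2 - s ^ 2)⁻¹ * Real.pi := by
    intro Y hY
    rw [aux_zero_const hs n y Y h1 (by linarith), ← integral_univ_inv_one_add_sq,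
      ← integral_const_mul]
    refine norm_integral_le_of_norm_le (integrable_inv_one_add_sq.const_mul _)
      (.of_forall fun w => ?_)
    rw [norm_pow, norm_inv, qq_norm_neg]
    have hY1 : 1 ≤ Y ^ 2 - s ^ 2 := by nlinarith
    have e1 : ‖qq s Y w‖⁻¹ ≤ (Y ^ 2 - s ^ 2)⁻¹ :=
      inv_anti₀ (by linarith) (by nlinarith [qq_ge s Y w, sq_nonneg w])
    have e2 : ‖qq s Y w‖⁻¹ ≤ (1 + w ^ 2)⁻¹ :=
      inv_anti₀ (by positivity) (by nlinarith [qq_ge s Y w, sq_nonneg w])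
    have e0 : 0 ≤ ‖qq s Y w‖⁻¹ := by positivity
    have e3 : ‖qq s Y w‖⁻¹ ≤ 1 := e2.trans (aux_u w).2.1
    calc ‖qq s Y w‖⁻¹ ^ (n + 2) ≤ ‖qq s Y w‖⁻¹ ^ 2 := pow_le_pow_of_le_one e0 e3 (by omega)
      _ = ‖qq s Y w‖⁻¹ * ‖qq s Y w‖⁻¹ := by ring
      _ ≤ _ := by gcongr
  have ht : Filter.Tendsto (fun Y : ℝ => (Y ^ 2 - s ^ 2)⁻¹ * Real.pi) Filter.atTop (nhds 0) := by
    have : Filter.Tendsto (fun Y : ℝ => Y ^ 2 - s ^ 2) Filter.atTop Filter.atTop :=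
      Filter.tendsto_atTop_add_const_right _ _ (Filter.tendsto_pow_atTop (by norm_num))
    simpa using this.inv_tendsto_atTop.mul_const Real.pi
  have := ge_of_tendsto ht (by
    filter_upwards [Filter.eventually_gt_atTop (s + 1)] with Y hY using hb Y hY)
  exact norm_le_zero_iff.1 this

/-- `φ ∘ arctan`. -/
noncomputable def Phi (n : ℕ) (T : ℝ) : ℝ := phi (n + 2) (Real.arctan T)

theorem Phi_hasDeriv (n : ℕ) (T : ℝ) :
    HasDerivAt (Phi n) (T ^ (2 * (n + 1)) / (1 + T ^ 2) ^ (n + 2)) T := by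
  have hc : Continuous fun u : ℝ => Real.sin u ^ (2 * (n + 2) - 2) := by fun_prop
  have h1 : HasDerivAt (phi (n + 2)) (Real.sin (Real.arctan T) ^ (2 * (n + 2) - 2))
      (Real.arctan T) :=
    intervalIntegral.integral_hasDerivAt_right (hc.intervalIntegrable _ _)
      (hc.stronglyMeasurableAtFilter _ _) hc.continuousAt
  have := h1.comp T (Real.hasDerivAt_arctan T)
  refine HasDerivAt.congr_deriv this ?_
  rw [show 2 * (n + 2) - 2 = 2 * (n + 1) by omega, pow_mul (Real.sin _), Real.sin_sq_arctan, div_pow,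
    ← pow_mul]
  have : (1 + T ^ 2) ≠ 0 := by positivity
  rw [pow_succ _ (n + 1)]
  field_simp

theorem Phi_eq (n : ℕ) (T : ℝ) :
    Phi n T = ∫ t in (0 : ℝ)..T, t ^ (2 * (n + 1)) / (1 + t ^ 2) ^ (n + 2) := by
  rw [intervalIntegral.integral_eq_sub_of_hasDerivAt (fun x _ => Phi_hasDeriv n x)]
  · simp [Phi, phi]
  · refine Continuous.intervalIntegrable ?_ _ _
    refine Continuous.div₀ (by fun_prop) (by fun_prop) fun x => ?_
    positivity

theorem Phi_bounds (n : ℕ) (T : ℝ) (hT : 0 ≤ T) :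
    0 ≤ Phi n T ∧ Phi n T ≤ T ^ (2 * n + 3) / (2 * n + 3) ∧
      T ^ (2 * n + 3) / (2 * n + 3) * ((1 + T ^ 2) ^ (n + 2))⁻¹ ≤ Phi n T := by
  have hc : Continuous fun t : ℝ => t ^ (2 * (n + 1)) / (1 + t ^ 2) ^ (n + 2) := by
    refine Continuous.div₀ (by fun_prop) (by fun_prop) fun x => ?_
    positivity
  have hp : ∫ t in (0 : ℝ)..T, t ^ (2 * (n + 1)) = T ^ (2 * n + 3) / (2 * n + 3) := by
    rw [integral_pow]
    push_cast
    rw [show 2 * (n + 1) + 1 = 2 * n + 3 by ring]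
    simp
    congr 1; ring
  have h3 : T ^ (2 * n + 3) / (2 * n + 3) * ((1 + T ^ 2) ^ (n + 2))⁻¹ ≤ Phi n T := by
    rw [Phi_eq, ← hp, ← intervalIntegral.integral_mul_const]
    refine intervalIntegral.integral_mono_on hT (Continuous.intervalIntegrable (by fun_prop) _ _)
      (hc.intervalIntegrable _ _) fun x hx => ?_
    rw [div_eq_mul_inv]
    have := hx.1
    have := hx.2
    gcongr
  refine ⟨le_trans (by positivity) h3, ?_, h3⟩
  rw [Phi_eq, ← hp]
  refine intervalIntegral.integral_mono_on hT (hc.intervalIntegrable _ _)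
    (Continuous.intervalIntegrable (by fun_prop) _ _) fun x hx => ?_
  have := hx.1
  refine div_le_self (by positivity) (one_le_pow₀ ?_)
  nlinarith

theorem Phi_le (n : ℕ) (T : ℝ) (hT : 0 ≤ T) : Phi n T ≤ T ^ (2 * n + 3) := by
  refine (Phi_bounds n T hT).2.1.trans (div_le_self (by positivity) ?_)
  have : (0 : ℝ) ≤ n := by positivity
  linarith

theorem Phi_lim (n : ℕ) : Filter.Tendsto (fun T : ℝ => Phi n T / T ^ (2 * n + 3))
    (nhdsWithin 0 (Set.Ioi 0)) (nhds (1 / (2 * n + 3))) := by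
  have hl : Filter.Tendsto (fun T : ℝ => (1 / (2 * n + 3) : ℝ) * ((1 + T ^ 2) ^ (n + 2))⁻¹)
      (nhdsWithin 0 (Set.Ioi 0)) (nhds (1 / (2 * n + 3))) := by
    have hc : ContinuousAt (fun T : ℝ => (1 / (2 * n + 3) : ℝ) * ((1 + T ^ 2) ^ (n + 2))⁻¹) 0 := by
      refine continuousAt_const.mul (ContinuousAt.inv₀ (by fun_prop) (by simp))
    have := hc.tendsto.mono_left (nhdsWithin_le_nhds (s := Set.Ioi 0))
    simpa using this
  refine tendsto_of_tendsto_of_tendsto_of_le_of_le' hl tendsto_const_nhds ?_ ?_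
  · filter_upwards [self_mem_nhdsWithin] with T hT
    have hT : 0 < T := hT
    rw [le_div_iff₀ (by positivity)]
    refine le_trans (le_of_eq ?_) (Phi_bounds n T hT.le).2.2
    ring
  · filter_upwards [self_mem_nhdsWithin] with T hT
    have hT : 0 < T := hT
    rw [div_le_iff₀ (by positivity)]
    refine (Phi_bounds n T hT.le).2.1.trans (le_of_eq ?_)
    ring

theorem phi_chain (n : ℕ) (N M P : ℝ) (hM : M ≠ 0) :
    (N / M) ^ (2 * (n + 1)) / (1 + (N / M) ^ 2) ^ (n + 2) * (P / M ^ 2) =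
      N ^ (2 * (n + 1)) * P / (M ^ 2 + N ^ 2) ^ (n + 2) := by
  have hS : 0 < M ^ 2 + N ^ 2 := by positivity
  have e : 1 + (N / M) ^ 2 = (M ^ 2 + N ^ 2) / M ^ 2 := by field_simp
  rw [e, div_pow, div_pow, pow_mul M, pow_succ (M ^ 2) (n + 1)]
  field_simp

/-- The normalised integrand. -/
noncomputable def GG (n : ℕ) (s y w : ℝ) : ℂ :=
  qq s y w ^ (n + 1) * ((Phi n (2 * s * y / (w ^ 2 + y ^ 2 - s ^ 2)) : ℝ) : ℂ)

theorem aux_cast (n : ℕ) {s y : ℝ} (hs : 0 ≤ s) (h : s < y) (w P : ℝ) :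
    qq s y w ^ (n + 1) * (((2 * s * y) ^ (2 * (n + 1)) * P /
        ((w ^ 2 + y ^ 2 - s ^ 2) ^ 2 + (2 * s * y) ^ 2) ^ (n + 2) : ℝ) : ℂ) =
      ((2 * s * y : ℝ) : ℂ) ^ (2 * (n + 1)) * (P : ℂ) *
        ((qq s y w)⁻¹ * (qq s (-y) w)⁻¹ ^ (n + 2)) := by
  have h1 := qq_ne hs h w
  have h2 := qq_ne' hs h w
  rw [Complex.ofReal_div, Complex.ofReal_pow _ (n + 2), ← qq_mul, Complex.ofReal_mul,
    Complex.ofReal_pow, mul_pow, pow_succ (qq s y w) (n + 1), inv_pow]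
  field_simp

theorem Phi_T_w (n : ℕ) {s y : ℝ} (hs : 0 ≤ s) (h : s < y) (w : ℝ) :
    HasDerivAt (fun w : ℝ => Phi n (2 * s * y / (w ^ 2 + y ^ 2 - s ^ 2)))
      ((2 * s * y) ^ (2 * (n + 1)) * (-(2 * w * (2 * s * y))) /
        ((w ^ 2 + y ^ 2 - s ^ 2) ^ 2 + (2 * s * y) ^ 2) ^ (n + 2)) w := by
  have hM := (qq_pos hs h w).ne'
  rw [← phi_chain n _ _ _ hM]
  have h1 : HasDerivAt (fun w : ℝ => w ^ 2 + y ^ 2 - s ^ 2) (2 * w) w := by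
    simpa using ((hasDerivAt_pow 2 w).add_const (y ^ 2)).sub_const (s ^ 2)
  have h2 : HasDerivAt (fun w : ℝ => 2 * s * y / (w ^ 2 + y ^ 2 - s ^ 2))
      (-(2 * w * (2 * s * y)) / (w ^ 2 + y ^ 2 - s ^ 2) ^ 2) w := by
    refine ((hasDerivAt_const w (2 * s * y)).fun_div h1 hM).congr_deriv ?_
    ring
  exact (Phi_hasDeriv n _).comp w h2

theorem Phi_T_y (n : ℕ) {s y : ℝ} (hs : 0 ≤ s) (h : s < y) (w : ℝ) :
    HasDerivAt (fun y : ℝ => Phi n (2 * s * y / (w ^ 2 + y ^ 2 - s ^ 2)))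
      ((2 * s * y) ^ (2 * (n + 1)) * (2 * s * (w ^ 2 - y ^ 2 - s ^ 2)) /
        ((w ^ 2 + y ^ 2 - s ^ 2) ^ 2 + (2 * s * y) ^ 2) ^ (n + 2)) y := by
  have hM := (qq_pos hs h w).ne'
  rw [← phi_chain n _ _ _ hM]
  have h1 : HasDerivAt (fun y : ℝ => w ^ 2 + y ^ 2 - s ^ 2) (2 * y) y := by
    simpa using ((hasDerivAt_pow 2 y).const_add (w ^ 2)).sub_const (s ^ 2)
  have h2 : HasDerivAt (fun y : ℝ => 2 * s * y / (w ^ 2 + y ^ 2 - s ^ 2))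
      (2 * s * (w ^ 2 - y ^ 2 - s ^ 2) / (w ^ 2 + y ^ 2 - s ^ 2) ^ 2) y := by
    refine (((hasDerivAt_id y).const_mul (2 * s)).fun_div h1 hM).congr_deriv ?_
    simp only [id]
    ring
  exact (Phi_hasDeriv n _).comp y h2

theorem GG_const (n : ℕ) {s : ℝ} (hs : 0 < s) (y y' : ℝ) (h1 : s < y) (h2 : s < y') :
    ∫ w, GG n s y w = ∫ w, GG n s y' w := by
  refine aux_const s (fun y w => GG n s y w)
    (fun y w => (n + 1 : ℂ) * qq s y w ^ n * (2 * ((w : ℂ) + (y : ℂ) * Complex.I)) *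
        ((Phi n (2 * s * y / (w ^ 2 + y ^ 2 - s ^ 2)) : ℝ) : ℂ) +
      ((2 * s * y : ℝ) : ℂ) ^ (2 * (n + 1)) * ((-(2 * w * (2 * s * y)) : ℝ) : ℂ) *
        ((qq s y w)⁻¹ * (qq s (-y) w)⁻¹ ^ (n + 2)))
    (fun y w => (2 * s : ℂ) * ((2 * s * y : ℝ) : ℂ) ^ (2 * (n + 1)) * (qq s (-y) w)⁻¹ ^ (n + 2))
    Complex.I ?_ ?_ ?_ ?_ ?_ y y' h1 h2
  · intro y h w
    refine (((qq_hasDeriv_w s y w).fun_pow (n + 1)).fun_mul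
      (Phi_T_w n hs.le h w).ofReal_comp).congr_deriv ?_
    rw [aux_cast n hs.le h]
    push_cast [Nat.add_sub_cancel]
    ring
  · intro y h w
    refine (((qq_hasDeriv_y s y w).fun_pow (n + 1)).fun_mul
      (Phi_T_y n hs.le h w).ofReal_comp).congr_deriv ?_
    rw [aux_cast n hs.le h]
    have e : ((2 * s * (w ^ 2 - y ^ 2 - s ^ 2) : ℝ) : ℂ) * (qq s y w)⁻¹ =
        Complex.I * ((-(2 * w * (2 * s * y)) : ℝ) : ℂ) * (qq s y w)⁻¹ + 2 * s := by
      have h1 := qq_ne hs.le h w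
      field_simp
      unfold qq
      push_cast
      linear_combination (-2 * s * y ^ 2 : ℂ) * Complex.I_sq
    simp only [Nat.add_sub_cancel]
    push_cast at e ⊢
    linear_combination ((2 * s * y : ℂ) ^ (2 * (n + 1)) * (qq s (-y) w)⁻¹ ^ (n + 2)) * e
  · intro y1 y2 h
    obtain ⟨K, hK1, hK⟩ := aux_bounds hs y1 y2 h
    refine ⟨K ^ (n + 1) * (K * K) ^ (2 * n + 3) +
      ((n + 1) * K ^ n * (2 * K) * (K * K) ^ (2 * n + 3) +
        K ^ (2 * (n + 1)) * (2 * K * K) * (K * K ^ (n + 2))) +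
      (2 * s) * K ^ (2 * (n + 1)) * K ^ (n + 2), fun y hy w => ?_⟩
    obtain ⟨b1, b2, b3, b4, b5⟩ := hK y hy w
    obtain ⟨u0, u1, u2⟩ := aux_u w
    have hM := qq_pos hs.le (h.trans_le hy.1) w
    have hy0 : 0 < y := hs.trans (h.trans_le hy.1)
    have hT0 : 0 ≤ 2 * s * y / (w ^ 2 + y ^ 2 - s ^ 2) := by positivity
    have hA : 0 < 1 + w ^ 2 := by positivity
    have hK0 : 0 < K := by linarith
    set u := (1 + w ^ 2)⁻¹
    set A := 1 + w ^ 2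
    have hP : Phi n (2 * s * y / (w ^ 2 + y ^ 2 - s ^ 2)) ≤ (K * (K * u)) ^ (2 * n + 3) := by
      refine (Phi_le n _ hT0).trans ?_
      rw [div_eq_mul_inv]
      gcongr
    have hPn : ‖((Phi n (2 * s * y / (w ^ 2 + y ^ 2 - s ^ 2)) : ℝ) : ℂ)‖ ≤
        (K * (K * u)) ^ (2 * n + 3) := by
      rw [Complex.norm_real, Real.norm_of_nonneg (Phi_bounds n _ hT0).1]
      exact hP
    have hN : ‖((2 * s * y : ℝ) : ℂ)‖ ≤ K := by
      rw [Complex.norm_real, Real.norm_of_nonneg (by positivity)]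
      exact b3
    have hu : ∀ j : ℕ, u ^ (j + 1) ≤ u := fun j => pow_le_of_le_one u0.le u1 (by omega)
    have c1 : ‖GG n s y w‖ ≤ K ^ (n + 1) * (K * K) ^ (2 * n + 3) * u := by
      rw [GG, norm_mul, norm_pow]
      calc _ ≤ (K * A) ^ (n + 1) * (K * (K * u)) ^ (2 * n + 3) := by gcongr
        _ = K ^ (n + 1) * (K * K) ^ (2 * n + 3) * (A * u) ^ (n + 1) * u ^ (n + 1 + 1) := by ring
        _ ≤ _ := by rw [u2, one_pow, mul_one]; gcongr; exact hu _
    have c2 : ‖(n + 1 : ℂ) * qq s y w ^ n * (2 * ((w : ℂ) + (y : ℂ) * Complex.I)) *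
        ((Phi n (2 * s * y / (w ^ 2 + y ^ 2 - s ^ 2)) : ℝ) : ℂ)‖ ≤
        (n + 1) * K ^ n * (2 * K) * (K * K) ^ (2 * n + 3) * u := by
      have e : ‖(n + 1 : ℂ)‖ = (n + 1 : ℝ) := by
        have : (n + 1 : ℂ) = ((n + 1 : ℕ) : ℂ) := by push_cast; ring
        rw [this, Complex.norm_natCast]; push_cast; ring
      rw [norm_mul, norm_mul, norm_mul, norm_mul, norm_pow, e, Complex.norm_two]
      calc _ ≤ (n + 1 : ℝ) * (K * A) ^ n * (2 * (K * A)) * (K * (K * u)) ^ (2 * n + 3) := by gcongr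
        _ = (n + 1) * K ^ n * (2 * K) * (K * K) ^ (2 * n + 3) * (A * u) ^ (n + 1) *
            u ^ (n + 1 + 1) := by ring
        _ ≤ _ := by rw [u2, one_pow, mul_one]; gcongr; exact hu _
    have c3 : ‖((2 * s * y : ℝ) : ℂ) ^ (2 * (n + 1)) * ((-(2 * w * (2 * s * y)) : ℝ) : ℂ) *
        ((qq s y w)⁻¹ * (qq s (-y) w)⁻¹ ^ (n + 2))‖ ≤
        K ^ (2 * (n + 1)) * (2 * K * K) * (K * K ^ (n + 2)) * u := by
      have e : ‖((-(2 * w * (2 * s * y)) : ℝ) : ℂ)‖ ≤ 2 * (K * A) * K := by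
        rw [Complex.norm_real, norm_neg, norm_mul, norm_mul, Real.norm_two,
          Real.norm_of_nonneg (by positivity : 0 ≤ 2 * s * y)]
        have : ‖w‖ ≤ ‖(w : ℂ) + (y : ℂ) * Complex.I‖ := by
          simpa using Complex.abs_re_le_norm ((w : ℂ) + (y : ℂ) * Complex.I)
        have := this.trans b2
        gcongr
      rw [norm_mul, norm_mul, norm_mul, norm_pow, norm_pow, norm_inv, norm_inv, qq_norm_neg]
      calc _ ≤ K ^ (2 * (n + 1)) * (2 * (K * A) * K) * ((K * u) * (K * u) ^ (n + 2)) := by gcongr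
        _ = K ^ (2 * (n + 1)) * (2 * K * K) * (K * K ^ (n + 2)) * (A * u) * u ^ (n + 1 + 1) := by
            ring
        _ ≤ _ := by rw [u2, mul_one]; gcongr; exact hu _
    have c4 : ‖(2 * s : ℂ) * ((2 * s * y : ℝ) : ℂ) ^ (2 * (n + 1)) *
        (qq s (-y) w)⁻¹ ^ (n + 2)‖ ≤ (2 * s) * K ^ (2 * (n + 1)) * K ^ (n + 2) * u := by
      have e : ‖(2 * s : ℂ)‖ = 2 * s := by
        rw [norm_mul, Complex.norm_two, Complex.norm_real, Real.norm_of_nonneg hs.le]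
      rw [norm_mul, norm_mul, norm_pow, norm_pow, norm_inv, qq_norm_neg, e]
      calc _ ≤ (2 * s) * K ^ (2 * (n + 1)) * (K * u) ^ (n + 2) := by gcongr
        _ = (2 * s) * K ^ (2 * (n + 1)) * K ^ (n + 2) * u ^ (n + 1 + 1) := by ring
        _ ≤ _ := by gcongr; exact hu _
    have p1 : 0 ≤ K ^ (n + 1) * (K * K) ^ (2 * n + 3) * u := by positivity
    have p2 : 0 ≤ (n + 1) * K ^ n * (2 * K) * (K * K) ^ (2 * n + 3) * u := by positivity
    have p3 : 0 ≤ K ^ (2 * (n + 1)) * (2 * K * K) * (K * K ^ (n + 2)) * u := by positivity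
    have p4 : 0 ≤ (2 * s) * K ^ (2 * (n + 1)) * K ^ (n + 2) * u := by positivity
    refine ⟨by linarith, ?_, by linarith⟩
    refine (norm_add_le_of_le c2 c3).trans ?_
    linarith
  · intro y h
    refine continuous_const.mul (Continuous.pow (Continuous.inv₀ ?_ fun w => qq_ne' hs.le h w) _)
    unfold qq; fun_prop
  · intro y h
    rw [integral_const_mul, aux_zero hs n y h, mul_zero]

theorem tendsto_inv_sub_I (l : Filter ℝ) (hl : Filter.Tendsto (fun t : ℝ => |t|) l Filter.atTop) :
    Filter.Tendsto (fun t : ℝ => ((t : ℂ) - Complex.I)⁻¹) l (nhds 0) := by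
  refine squeeze_zero_norm' ?_ hl.inv_tendsto_atTop
  filter_upwards [hl.eventually_gt_atTop 0] with t ht
  rw [norm_inv]
  refine inv_anti₀ ht ?_
  simpa using Complex.abs_re_le_norm ((t : ℂ) - Complex.I)

theorem t_sub_ne (t : ℝ) : (t : ℂ) - Complex.I ≠ 0 := by
  intro h
  simpa using congrArg Complex.im h

theorem t_add_ne (t : ℝ) : (t : ℂ) + Complex.I ≠ 0 := by
  intro h
  simpa using congrArg Complex.im h

theorem t_mul (t : ℝ) : ((t : ℂ) + Complex.I) * ((t : ℂ) - Complex.I) = ((1 + t ^ 2 : ℝ) : ℂ) := by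
  push_cast
  linear_combination -Complex.I_sq

theorem t_norm_sub (t : ℝ) : ‖((t : ℂ) - Complex.I)⁻¹‖ ^ 2 = (1 + t ^ 2)⁻¹ := by
  rw [norm_inv, inv_pow, ← Complex.normSq_eq_norm_sq, Complex.normSq_apply]
  simp; ring_nf

theorem t_norm_add (t : ℝ) : ‖((t : ℂ) + Complex.I)⁻¹‖ ^ 2 = (1 + t ^ 2)⁻¹ := by
  rw [norm_inv, inv_pow, ← Complex.normSq_eq_norm_sq, Complex.normSq_apply]
  simp; ring_nf

theorem t_norm_eq (t : ℝ) : ‖((t : ℂ) + Complex.I)⁻¹‖ = ‖((t : ℂ) - Complex.I)⁻¹‖ := by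
  rw [← sq_eq_sq₀ (norm_nonneg _) (norm_nonneg _), t_norm_add, t_norm_sub]

theorem t_pow_le (t : ℝ) (m : ℕ) : ‖((t : ℂ) - Complex.I)⁻¹‖ ^ (m + 2) ≤ (1 + t ^ 2)⁻¹ := by
  rw [← t_norm_sub]
  refine pow_le_pow_of_le_one (norm_nonneg _) ?_ (by omega)
  rw [← sq_le_one_iff₀ (norm_nonneg _), t_norm_sub]
  exact (aux_u t).2.1

theorem t_int_sub (m : ℕ) : Integrable (fun t : ℝ => ((t : ℂ) - Complex.I)⁻¹ ^ (m + 2)) := by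
  refine integrable_inv_one_add_sq.mono' (Continuous.aestronglyMeasurable ?_)
    (.of_forall fun t => ?_)
  · exact (Continuous.inv₀ (by fun_prop) t_sub_ne).pow _
  · rw [norm_pow]; exact t_pow_le t m

theorem t_int_A (m : ℕ) : Integrable (fun t : ℝ => ((t : ℂ) + Complex.I)⁻¹ *
    ((t : ℂ) - Complex.I)⁻¹ ^ (m + 1)) := by
  refine integrable_inv_one_add_sq.mono' (Continuous.aestronglyMeasurable ?_)
    (.of_forall fun t => ?_)
  · exact (Continuous.inv₀ (by fun_prop) t_add_ne).mul
      ((Continuous.inv₀ (by fun_prop) t_sub_ne).pow _)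
  · rw [norm_mul, norm_pow, t_norm_eq, ← pow_succ']; exact t_pow_le t m

theorem t_int_zero (m : ℕ) : ∫ t : ℝ, ((t : ℂ) - Complex.I)⁻¹ ^ (m + 2) = 0 := by
  have hd : ∀ t : ℝ, HasDerivAt (fun t : ℝ => ((t : ℂ) - Complex.I)⁻¹ ^ (m + 1))
      (-(m + 1 : ℂ) * ((t : ℂ) - Complex.I)⁻¹ ^ (m + 2)) t := by
    intro t
    have := ((((hasDerivAt_id (t : ℂ)).sub_const Complex.I).fun_inv
      (t_sub_ne t)).fun_pow (m + 1)).comp_ofReal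
    refine HasDerivAt.congr_deriv this ?_
    simp only [Nat.add_sub_cancel, id, div_eq_mul_inv, ← inv_pow]
    push_cast
    ring
  have hz : ∀ l : Filter ℝ, Filter.Tendsto (fun t : ℝ => |t|) l Filter.atTop →
      Filter.Tendsto (fun t : ℝ => ((t : ℂ) - Complex.I)⁻¹ ^ (m + 1)) l (nhds 0) := by
    intro l hl
    simpa using (tendsto_inv_sub_I l hl).pow (m + 1)
  have := integral_of_hasDerivAt_of_tendsto hd ((t_int_sub m).const_mul _)
    (hz _ Filter.tendsto_abs_atBot_atTop) (hz _ Filter.tendsto_abs_atTop_atTop)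
  rw [integral_const_mul, sub_zero, mul_eq_zero] at this
  refine this.resolve_left ?_
  exact neg_ne_zero.2 (by exact_mod_cast Nat.succ_ne_zero m)

theorem t_int_val (m : ℕ) : ∫ t : ℝ, ((t : ℂ) + Complex.I)⁻¹ * ((t : ℂ) - Complex.I)⁻¹ ^ (m + 1) =
    (Complex.I / 2) ^ m * (Real.pi : ℂ) := by
  induction m with
  | zero =>
    have : ∀ t : ℝ, ((t : ℂ) + Complex.I)⁻¹ * ((t : ℂ) - Complex.I)⁻¹ ^ (0 + 1) =
        (((1 + t ^ 2)⁻¹ : ℝ) : ℂ) := by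
      intro t
      rw [zero_add, pow_one, ← mul_inv, t_mul, Complex.ofReal_inv]
    simp_rw [this]
    rw [integral_complex_ofReal, integral_univ_inv_one_add_sq]
    simp
  | succ m ih =>
    have : ∀ t : ℝ, ((t : ℂ) + Complex.I)⁻¹ * ((t : ℂ) - Complex.I)⁻¹ ^ (m + 1 + 1) =
        (Complex.I / 2) * (((t : ℂ) + Complex.I)⁻¹ * ((t : ℂ) - Complex.I)⁻¹ ^ (m + 1)) +
        (-Complex.I / 2) * ((t : ℂ) - Complex.I)⁻¹ ^ (m + 2) := by
      intro t
      have h1 := t_add_ne t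
      have h2 := t_sub_ne t
      have e : ((t : ℂ) + Complex.I)⁻¹ * ((t : ℂ) - Complex.I)⁻¹ =
          Complex.I / 2 * (((t : ℂ) + Complex.I)⁻¹ - ((t : ℂ) - Complex.I)⁻¹) := by
        field_simp
        linear_combination 2 * Complex.I_sq
      linear_combination ((t : ℂ) - Complex.I)⁻¹ ^ (m + 1) * e
    simp_rw [this]
    rw [integral_add ((t_int_A m).const_mul _) ((t_int_sub m).const_mul _), integral_const_mul,
      integral_const_mul, ih, t_int_zero]
    ring

theorem GG_scale (n : ℕ) (s Y t : ℝ) (hY : 0 < Y) :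
    GG n s Y (Y * t) = (Y : ℂ) ^ (2 * n + 2) * GG n (s / Y) 1 t := by
  have hY' : (Y : ℂ) ≠ 0 := by exact_mod_cast hY.ne'
  have e1 : qq s Y (Y * t) = (Y : ℂ) ^ 2 * qq (s / Y) 1 t := by
    unfold qq; push_cast; field_simp
  have e2 : 2 * s * Y / ((Y * t) ^ 2 + Y ^ 2 - s ^ 2) =
      2 * (s / Y) * 1 / (t ^ 2 + 1 ^ 2 - (s / Y) ^ 2) := by
    have : t ^ 2 + 1 ^ 2 - (s / Y) ^ 2 = ((Y * t) ^ 2 + Y ^ 2 - s ^ 2) / Y ^ 2 := by field_simp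
    rw [this, div_div_eq_mul_div]
    congr 1
    field_simp
  rw [GG, GG, e1, e2]
  ring

theorem GG_int_scale (n : ℕ) (s Y : ℝ) (hs : 0 < s) (hY : 0 < Y) :
    ∫ w, GG n s Y w = (s : ℂ) ^ (2 * n + 3) *
      ∫ t, ((s / Y : ℝ) : ℂ)⁻¹ ^ (2 * n + 3) * GG n (s / Y) 1 t := by
  have h := Measure.integral_comp_mul_left (fun w => GG n s Y w) Y
  simp_rw [GG_scale n s Y _ hY] at h
  have hY' : (Y : ℂ) ≠ 0 := by exact_mod_cast hY.ne'
  have hs' : (s : ℂ) ≠ 0 := by exact_mod_cast hs.ne'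
  rw [integral_const_mul, abs_of_pos (inv_pos.2 hY), Complex.real_smul] at h
  push_cast at h
  rw [integral_const_mul]
  have : ∫ w, GG n s Y w = (Y : ℂ) * ((Y : ℂ)⁻¹ * ∫ w, GG n s Y w) := by field_simp
  rw [this, ← h]
  push_cast [inv_div, div_pow]
  field_simp
  ring

theorem GG_lim_pt (n : ℕ) (t : ℝ) :
    Filter.Tendsto (fun σ : ℝ => (σ : ℂ)⁻¹ ^ (2 * n + 3) * GG n σ 1 t)
      (nhdsWithin 0 (Set.Ioi 0)) (nhds ((2 ^ (2 * n + 3) / (2 * n + 3) : ℂ) *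
        (((t : ℂ) + Complex.I)⁻¹ * ((t : ℂ) - Complex.I)⁻¹ ^ (2 * n + 2 + 1)))) := by
  have hA : 0 < 1 + t ^ 2 := by positivity
  have hMc : ContinuousAt (fun σ : ℝ => 2 / (t ^ 2 + 1 ^ 2 - σ ^ 2)) 0 := by
    refine ContinuousAt.div (by fun_prop) (by fun_prop) ?_
    simp; positivity
  have hM1 : Filter.Tendsto (fun σ : ℝ => 2 / (t ^ 2 + 1 ^ 2 - σ ^ 2))
      (nhdsWithin 0 (Set.Ioi 0)) (nhds (2 / (1 + t ^ 2))) := by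
    have := hMc.tendsto.mono_left (nhdsWithin_le_nhds (s := Set.Ioi 0))
    simpa [add_comm] using this
  have hs1 : ∀ᶠ σ : ℝ in nhdsWithin 0 (Set.Ioi 0), 0 < σ ∧ σ < 1 :=
    Filter.Eventually.and self_mem_nhdsWithin (nhdsWithin_le_nhds (gt_mem_nhds one_pos))
  have hT : Filter.Tendsto (fun σ : ℝ => 2 * σ * 1 / (t ^ 2 + 1 ^ 2 - σ ^ 2))
      (nhdsWithin 0 (Set.Ioi 0)) (nhdsWithin 0 (Set.Ioi 0)) := by
    rw [tendsto_nhdsWithin_iff]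
    constructor
    · have h0 : Filter.Tendsto (fun σ : ℝ => σ) (nhdsWithin 0 (Set.Ioi 0)) (nhds 0) :=
        Filter.tendsto_id.mono_left nhdsWithin_le_nhds
      have := h0.mul hM1
      rw [zero_mul] at this
      refine this.congr fun σ => by ring
    · filter_upwards [hs1] with σ hσ
      have h1 := qq_pos hσ.1.le hσ.2 t
      have h2 := hσ.1
      exact Set.mem_Ioi.2 (by positivity)
  have hP := ((Phi_lim n).comp hT).mul (hM1.pow (2 * n + 3))
  have hq : Filter.Tendsto (fun σ : ℝ => qq σ 1 t ^ (n + 1))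
      (nhdsWithin 0 (Set.Ioi 0)) (nhds ((((t : ℂ) + Complex.I) ^ 2) ^ (n + 1))) := by
    have hc : Continuous (fun σ : ℝ => qq σ 1 t ^ (n + 1)) := by unfold qq; fun_prop
    have := (hc.tendsto 0).mono_left (nhdsWithin_le_nhds (s := Set.Ioi 0))
    simpa [qq] using this
  have hfin := hq.mul ((Complex.continuous_ofReal.tendsto _).comp hP)
  have hval : (((t : ℂ) + Complex.I) ^ 2) ^ (n + 1) *
      ((1 / (2 * n + 3) * (2 / (1 + t ^ 2)) ^ (2 * n + 3) : ℝ) : ℂ) =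
      (2 ^ (2 * n + 3) / (2 * n + 3) : ℂ) *
        (((t : ℂ) + Complex.I)⁻¹ * ((t : ℂ) - Complex.I)⁻¹ ^ (2 * n + 2 + 1)) := by
    have h1 := t_add_ne t
    have h2 := t_sub_ne t
    rw [Complex.ofReal_mul, Complex.ofReal_pow, Complex.ofReal_div 2, ← t_mul, div_pow, mul_pow,
      ← pow_mul, show 2 * n + 3 = 2 * (n + 1) + 1 by ring, pow_succ ((t : ℂ) + Complex.I), inv_pow]
    push_cast
    field_simp
  rw [← hval]
  refine hfin.congr' ?_
  filter_upwards [hs1] with σ hσ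
  have h1 := (qq_pos hσ.1.le hσ.2 t).ne'
  have h2 := hσ.1.ne'
  simp only [Function.comp]
  rw [GG]
  have : Phi n (2 * σ * 1 / (t ^ 2 + 1 ^ 2 - σ ^ 2)) /
      (2 * σ * 1 / (t ^ 2 + 1 ^ 2 - σ ^ 2)) ^ (2 * n + 3) *
      (2 / (t ^ 2 + 1 ^ 2 - σ ^ 2)) ^ (2 * n + 3) =
      σ⁻¹ ^ (2 * n + 3) * Phi n (2 * σ * 1 / (t ^ 2 + 1 ^ 2 - σ ^ 2)) := by
    generalize Phi n (2 * σ * 1 / (t ^ 2 + 1 ^ 2 - σ ^ 2)) = p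
    rw [div_mul_eq_mul_div, mul_div_assoc, ← div_pow, mul_comm]
    congr 2
    rw [one_pow] at h1 ⊢
    field_simp
  rw [this]
  push_cast
  ring

theorem GG_cont (n : ℕ) {s y : ℝ} (hs : 0 ≤ s) (h : s < y) : Continuous (GG n s y) := by
  unfold GG
  refine Continuous.mul ?_ (Complex.continuous_ofReal.comp ?_)
  · unfold qq; fun_prop
  · exact continuous_iff_continuousAt.2 fun w => (Phi_T_w n hs h w).continuousAt

theorem GG_lim (n : ℕ) :
    Filter.Tendsto (fun σ : ℝ => ∫ t, (σ : ℂ)⁻¹ ^ (2 * n + 3) * GG n σ 1 t)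
      (nhdsWithin 0 (Set.Ioi 0)) (nhds ((2 ^ (2 * n + 3) / (2 * n + 3) : ℂ) *
        ((Complex.I / 2) ^ (2 * n + 2) * (Real.pi : ℂ)))) := by
  rw [← t_int_val, ← integral_const_mul]
  have hs1 : ∀ᶠ σ : ℝ in nhdsWithin 0 (Set.Ioi 0), 0 < σ ∧ σ < 1 / 2 :=
    Filter.Eventually.and self_mem_nhdsWithin (nhdsWithin_le_nhds (gt_mem_nhds (by norm_num)))
  refine tendsto_integral_filter_of_dominated_convergence
    (fun t => 2 ^ (n + 1) * 4 ^ (2 * n + 3) * (1 + t ^ 2)⁻¹) ?_ ?_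
    (integrable_inv_one_add_sq.const_mul _) (.of_forall fun t => GG_lim_pt n t)
  · filter_upwards [hs1] with σ hσ
    exact ((GG_cont n hσ.1.le (by linarith [hσ.2])).const_mul _).aestronglyMeasurable
  · filter_upwards [hs1] with σ hσ
    refine .of_forall fun t => ?_
    obtain ⟨h0, h1⟩ := hσ
    obtain ⟨u0, u1, u2⟩ := aux_u t
    have hM := qq_pos h0.le (show σ < 1 by linarith) t
    have hT0 : 0 ≤ 2 * σ * 1 / (t ^ 2 + 1 ^ 2 - σ ^ 2) := by positivity
    have hq : ‖qq σ 1 t‖ ≤ 2 * (1 + t ^ 2) := (qq_le σ 1 t).trans (by nlinarith [sq_nonneg t])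
    have hA : 0 < 1 + t ^ 2 := by positivity
    have hMi : (t ^ 2 + 1 ^ 2 - σ ^ 2)⁻¹ ≤ 2 * (1 + t ^ 2)⁻¹ := by
      rw [← div_eq_mul_inv, inv_eq_one_div, div_le_div_iff₀ hM hA]
      nlinarith [sq_nonneg t]
    set u := (1 + t ^ 2)⁻¹
    set A := 1 + t ^ 2
    have hP : Phi n (2 * σ * 1 / (t ^ 2 + 1 ^ 2 - σ ^ 2)) ≤ (2 * σ * 1 * (2 * u)) ^ (2 * n + 3) := by
      refine (Phi_le n _ hT0).trans ?_
      rw [div_eq_mul_inv] at hT0 ⊢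
      gcongr
    rw [GG, norm_mul, norm_mul, norm_pow, norm_pow, norm_inv, Complex.norm_real, Complex.norm_real,
      Real.norm_of_nonneg (Phi_bounds n _ hT0).1, Real.norm_of_nonneg h0.le]
    calc _ ≤ σ⁻¹ ^ (2 * n + 3) * ((2 * A) ^ (n + 1) * (2 * σ * 1 * (2 * u)) ^ (2 * n + 3)) := by
          gcongr
          exact (Phi_bounds n _ hT0).1
      _ = 2 ^ (n + 1) * 4 ^ (2 * n + 3) * (A * u) ^ (n + 1) * (σ⁻¹ * σ) ^ (2 * n + 3) *
          u ^ (n + 2) := by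
          rw [show (4 : ℝ) = 2 * 2 by norm_num]
          ring
      _ ≤ _ := by
          rw [u2, inv_mul_cancel₀ h0.ne', one_pow, one_pow, mul_one, mul_one]
          gcongr
          exact pow_le_of_le_one u0.le u1 (by omega)

theorem GG_value (n : ℕ) {s y : ℝ} (hs : 0 < s) (h : s < y) :
    ∫ w, GG n s y w = (s : ℂ) ^ (2 * n + 3) * ((2 ^ (2 * n + 3) / (2 * n + 3) : ℂ) *
        ((Complex.I / 2) ^ (2 * n + 2) * (Real.pi : ℂ))) := by
  have hl := (GG_lim n).const_mul ((s : ℂ) ^ (2 * n + 3))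
  have hc : Filter.Tendsto (fun _ : ℝ => ∫ w, GG n s y w) (nhdsWithin 0 (Set.Ioi 0))
      (nhds (∫ w, GG n s y w)) := tendsto_const_nhds
  refine tendsto_nhds_unique hc (hl.congr' ?_)
  have hs1 : ∀ᶠ σ : ℝ in nhdsWithin 0 (Set.Ioi 0), 0 < σ ∧ σ < 1 :=
    Filter.Eventually.and self_mem_nhdsWithin (nhdsWithin_le_nhds (gt_mem_nhds (by norm_num)))
  filter_upwards [hs1] with σ hσ
  obtain ⟨h0, h1⟩ := hσ
  have hlt : s < s / σ := by rw [lt_div_iff₀ h0]; nlinarith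
  rw [GG_const n hs y (s / σ) h hlt, GG_int_scale n s (s / σ) hs (hs.trans hlt),
    show s / (s / σ) = σ by field_simp]

theorem stmt8 (k : ℕ) (hk : 2 ≤ k) (D : ℤ) (hD : 0 < D)
    (hD4 : D % 4 = 0 ∨ D % 4 = 1) (hDsq : ¬∃ m : ℤ, m ^ 2 = D)
    (a : ℤ) (ha : 1 ≤ a) (y : ℝ) (hy : Real.sqrt (D : ℝ) / (2 * (a : ℝ)) < y) :
    ∫ w : ℝ,
        ((a : ℂ) * ((w : ℂ) + (y : ℂ) * Complex.I) ^ 2 - (D : ℂ) / (4 * (a : ℂ))) ^ (k - 1) *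
          ((phi k (Real.arctan
              (Real.sqrt (D : ℝ) * y / ((a : ℝ) * (w ^ 2 + y ^ 2) - (D : ℝ) / (4 * (a : ℝ))))) : ℝ) : ℂ)
      = (-1 : ℂ) ^ (k + 1) * Dpow D ((k : ℝ) - 1 / 2) * ((Real.pi : ℝ) : ℂ) /
          ((a : ℂ) ^ k * 2 ^ (2 * k - 2) * (2 * (k : ℂ) - 1)) := by
  obtain ⟨n, rfl⟩ : ∃ n, k = n + 2 := ⟨k - 2, by omega⟩
  have haR : (0 : ℝ) < a := by exact_mod_cast (by omega : 0 < a)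
  have hDR : (0 : ℝ) < D := by exact_mod_cast hD
  have hsq : 0 < Real.sqrt (D : ℝ) := Real.sqrt_pos.2 hDR
  have haC : (a : ℂ) ≠ 0 := by exact_mod_cast (by omega : a ≠ 0)
  set r := Real.sqrt (D : ℝ) with hr
  have hr2 : r ^ 2 = D := Real.sq_sqrt hDR.le
  have hr2C : (D : ℂ) = (r : ℂ) ^ 2 := by
    have : ((r ^ 2 : ℝ) : ℂ) = ((D : ℝ) : ℂ) := by rw [hr2]
    push_cast at this
    exact this.symm
  have hs : 0 < r / (2 * (a : ℝ)) := by positivity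
  have hpt : ∀ w : ℝ,
      ((a : ℂ) * ((w : ℂ) + (y : ℂ) * Complex.I) ^ 2 - (D : ℂ) / (4 * (a : ℂ))) ^ (n + 2 - 1) *
          ((phi (n + 2) (Real.arctan
              (r * y / ((a : ℝ) * (w ^ 2 + y ^ 2) - (D : ℝ) / (4 * (a : ℝ))))) : ℝ) : ℂ) =
      (a : ℂ) ^ (n + 1) * GG n (r / (2 * (a : ℝ))) y w := by
    intro w
    have hM := (qq_pos hs.le hy w).ne'
    have e1 : (a : ℂ) * ((w : ℂ) + (y : ℂ) * Complex.I) ^ 2 - (D : ℂ) / (4 * (a : ℂ)) =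
        (a : ℂ) * qq (r / (2 * (a : ℝ))) y w := by
      rw [hr2C, qq]; push_cast; field_simp; ring
    have e2 : r * y / ((a : ℝ) * (w ^ 2 + y ^ 2) - (D : ℝ) / (4 * (a : ℝ))) =
        2 * (r / (2 * (a : ℝ))) * y / (w ^ 2 + y ^ 2 - (r / (2 * (a : ℝ))) ^ 2) := by
      have : (a : ℝ) * (w ^ 2 + y ^ 2) - (D : ℝ) / (4 * (a : ℝ)) =
          a * (w ^ 2 + y ^ 2 - (r / (2 * (a : ℝ))) ^ 2) := by
        rw [← hr2]; field_simp; ring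
      rw [this]
      field_simp
    rw [e1, e2, GG, Phi, mul_pow, show n + 2 - 1 = n + 1 from rfl]
    ring
  simp_rw [hpt]
  rw [MeasureTheory.integral_const_mul, GG_value n hs hy]
  have hDp : Dpow D (((n + 2 : ℕ) : ℝ) - 1 / 2) = (r : ℂ) ^ (2 * n + 3) := by
    rw [Dpow, hr, Real.sqrt_eq_rpow, ← Complex.ofReal_pow, ← Real.rpow_natCast, ← Real.rpow_mul hDR.le]
    congr 2
    push_cast
    ring
  have hI : (Complex.I / 2) ^ (2 * n + 2) = (-1) ^ (n + 2 + 1) / 2 ^ (2 * n + 2) := by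
    rw [div_pow, show 2 * n + 2 = 2 * (n + 1) by ring, pow_mul, Complex.I_sq]
    congr 1
    ring
  rw [hDp, hI, show 2 * (n + 2) - 2 = 2 * n + 2 by omega]
  have hn : (2 * n + 3 : ℂ) ≠ 0 := by exact_mod_cast (by omega : 2 * n + 3 ≠ 0)
  have hn' : (2 * ((n + 2 : ℕ) : ℂ) - 1) = 2 * n + 3 := by push_cast; ring
  rw [hn']
  push_cast
  rw [div_pow, mul_pow]
  have h22 : (2 : ℂ) ^ (2 * n + 2) ≠ 0 := pow_ne_zero _ two_ne_zero
  have e3 : (a : ℂ) ^ (2 * n + 3) = (a : ℂ) ^ (n + 1) * (a : ℂ) ^ (n + 2) := by ring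
  rw [e3]
  field_simp
end

section
/- For every prime p and every τ ∈ ℍ: (F_{1−k,D}|_{2−2k}T_p)(τ) = F_{1−k,Dp²}(τ) + p^{−k}·(D|p)·F_{1−k,D}(τ) + p^{1−2k}·F_{1−k,D/p²}(τ), where F_{1−k,D/p²} := 0 if p² ∤ D. -/
namespace HeckeAux

lemma cube_le_two_pow (e : ℕ) : (e + 1) ^ 3 ≤ 8 * 2 ^ e := by
  by_cases h : e < 3
  · interval_cases e <;> norm_num
  · push Not at h
    induction e, h using Nat.le_induction with
    | base => norm_num
    | succ n hn ih =>
      rw [pow_succ 2 n]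
      nlinarith [mul_le_mul hn hn (by norm_num) (by omega)]

lemma two_pow_cube (e : ℕ) : (e + 1) ^ 3 ≤ 8 ^ e := by
  have h : e + 1 ≤ 2 ^ e := by
    have := @Nat.lt_two_pow_self e
    omega
  calc (e + 1) ^ 3 ≤ (2 ^ e) ^ 3 := Nat.pow_le_pow_left h 3
    _ = 8 ^ e := by rw [← pow_mul, mul_comm, pow_mul]; norm_num

lemma divisor_bound (n : ℕ) (hn : n ≠ 0) : (n.divisors.card) ^ 3 ≤ 8 ^ 8 * n := by
  rw [Nat.card_divisors hn, ← Finset.prod_pow]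
  have h1 : ∀ p ∈ n.primeFactors, (n.factorization p + 1) ^ 3 ≤
      (if p < 8 then 8 else 1) * p ^ (n.factorization p) := by
    intro p hp
    have hp2 : 2 ≤ p := (Nat.prime_of_mem_primeFactors hp).two_le
    split_ifs with h
    · exact (cube_le_two_pow _).trans (Nat.mul_le_mul_left _ (Nat.pow_le_pow_left hp2 _))
    · rw [one_mul]
      exact (two_pow_cube _).trans (Nat.pow_le_pow_left (by omega) _)
  refine (Finset.prod_le_prod' h1).trans ?_
  rw [Finset.prod_mul_distrib]
  have h2 : ∏ p ∈ n.primeFactors, p ^ (n.factorization p) = n := Nat.prod_factorization_pow_eq_self hn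
  rw [h2]
  apply Nat.mul_le_mul_right
  rw [Finset.prod_ite]
  simp only [Finset.prod_const, one_pow, mul_one]
  apply Nat.pow_le_pow_right (by norm_num)
  calc _ ≤ (Finset.range 8).card := Finset.card_le_card (by intro x; simp)
    _ = 8 := by simp

lemma psi_bound (k : ℕ) (hk : 2 ≤ k) (v : ℝ) (h0 : 0 < v) (h1 : v ≤ 1) :
    |psi k v| ≤ v ^ ((k : ℝ) - 3 / 2) * v := by
  have hk' : (2 : ℝ) ≤ k := by exact_mod_cast hk
  have hInt : IntervalIntegrable (fun u : ℝ => (1 - u) ^ (-(1:ℝ) / 2)) MeasureTheory.volume 0 v := by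
    have := (intervalIntegral.intervalIntegrable_rpow' (a := 1) (b := 1 - v) (r := -(1:ℝ)/2)
      (by norm_num)).comp_sub_left 1
    simpa using this
  have hval : ∫ u in (0:ℝ)..v, (1 - u) ^ (-(1:ℝ) / 2) = 2 * (1 - (1 - v) ^ ((1:ℝ)/2)) := by
    rw [intervalIntegral.integral_comp_sub_left (fun x => x ^ (-(1:ℝ)/2)) 1,
      integral_rpow (Or.inl (by norm_num))]
    norm_num
    ring
  have hb : ‖∫ u in (0:ℝ)..v, u ^ ((k : ℝ) - 3 / 2) * (1 - u) ^ (-(1:ℝ) / 2)‖ ≤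
      ∫ u in (0:ℝ)..v, v ^ ((k : ℝ) - 3 / 2) * (1 - u) ^ (-(1:ℝ) / 2) := by
    apply intervalIntegral.norm_integral_le_of_norm_le h0.le
    · refine Filter.Eventually.of_forall fun u hu => ?_
      have h2 : 0 ≤ (1 - u) ^ (-(1:ℝ) / 2) := Real.rpow_nonneg (by linarith [hu.2]) _
      rw [norm_mul, Real.norm_of_nonneg h2, Real.norm_of_nonneg (Real.rpow_nonneg hu.1.le _)]
      exact mul_le_mul_of_nonneg_right
        (Real.rpow_le_rpow hu.1.le hu.2 (by linarith)) h2
    · exact hInt.const_mul _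
  rw [intervalIntegral.integral_const_mul, hval] at hb
  have h3 : 1 - v ≤ (1 - v) ^ ((1:ℝ)/2) := by
    have := Real.rpow_le_rpow_of_exponent_ge_of_imp (x := 1 - v) (y := 1) (z := 1/2)
      (by linarith) (by linarith) (by norm_num) (by norm_num)
    simpa using this
  have h4 : 0 ≤ v ^ ((k : ℝ) - 3 / 2) := Real.rpow_nonneg h0.le _
  unfold psi
  rw [abs_mul, abs_of_nonneg (by norm_num : (0:ℝ) ≤ 1/2)]
  rw [Real.norm_eq_abs] at hb
  nlinarith

lemma normSq_Qval (q : ℤ × ℤ × ℤ) (D : ℤ) (hq : q ∈ QD D) (τ : ℂ) :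
    Complex.normSq (Qval q τ) = Qell q τ ^ 2 + D * τ.im ^ 2 := by
  have h : q.2.1 ^ 2 - 4 * q.1 * q.2.2 = D := hq
  have h' : (q.2.1 : ℝ) ^ 2 - 4 * q.1 * q.2.2 = D := by exact_mod_cast h
  rw [← h']
  simp only [Qval, Qell, Complex.normSq_apply, Complex.add_re, Complex.add_im, Complex.mul_re,
    Complex.mul_im, pow_two, Complex.intCast_re, Complex.intCast_im]
  ring

lemma Fsummand_bound (k : ℕ) (hk : 2 ≤ k) (D : ℤ) (hD : 0 < D) (τ : ℂ) (hτ : 0 < τ.im)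
    (q : ℤ × ℤ × ℤ) (hq : q ∈ QD D) :
    ‖Fsummand k D τ q‖ ≤ (Real.sqrt (D * τ.im ^ 2)) ^ (k - 1) *
      (D * τ.im ^ 2 / Complex.normSq (Qval q τ)) := by
  have hk' : (2 : ℝ) ≤ k := by exact_mod_cast hk
  have hD' : (0 : ℝ) < D := by exact_mod_cast hD
  have hs : 0 < (D : ℝ) * τ.im ^ 2 := by positivity
  have hN := normSq_Qval q D hq τ
  have hN0 : 0 < Complex.normSq (Qval q τ) := by rw [hN]; positivity
  set N := Complex.normSq (Qval q τ) with hNdef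
  set s := (D : ℝ) * τ.im ^ 2 with hsdef
  have hv0 : 0 < s / N := by positivity
  have hv1 : s / N ≤ 1 := by rw [div_le_one hN0, hN]; nlinarith [sq_nonneg (Qell q τ)]
  have hnorm : ‖Qval q τ‖ = Real.sqrt N := by
    rw [hNdef, Complex.normSq_eq_norm_sq, Real.sqrt_sq (norm_nonneg _)]
  have hsg : |Real.sign (Qell q τ)| ≤ 1 := by
    rcases Real.sign_apply_eq (Qell q τ) with h | h | h <;> rw [h] <;> norm_num
  have hkey : (Real.sqrt N) ^ (k - 1) * (s / N) ^ ((k : ℝ) - 3 / 2) ≤ (Real.sqrt s) ^ (k - 1) := by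
    have h1 : (s / N) ^ ((k : ℝ) - 3 / 2) ≤ (s / N) ^ (((k : ℝ) - 1) / 2) :=
      Real.rpow_le_rpow_of_exponent_ge hv0 hv1 (by linarith)
    have h2 : (s / N) ^ (((k : ℝ) - 1) / 2) = (Real.sqrt (s / N)) ^ (k - 1) := by
      rw [Real.sqrt_eq_rpow, ← Real.rpow_natCast, ← Real.rpow_mul hv0.le]
      congr 1
      rw [Nat.cast_sub (by omega)]; push_cast; ring
    calc _ ≤ (Real.sqrt N) ^ (k - 1) * (Real.sqrt (s / N)) ^ (k - 1) := by
          rw [← h2]; gcongr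
      _ = (Real.sqrt s) ^ (k - 1) := by
          rw [← mul_pow, ← Real.sqrt_mul hN0.le, mul_div_cancel₀ _ hN0.ne']
  unfold Fsummand
  rw [norm_mul, norm_mul, norm_pow, hnorm, Complex.norm_real, Complex.norm_real,
    Real.norm_eq_abs, Real.norm_eq_abs]
  have hpsi := psi_bound k hk (s / N) hv0 hv1
  have hA : 0 ≤ (Real.sqrt N) ^ (k - 1) := by positivity
  calc _ ≤ 1 * (Real.sqrt N) ^ (k - 1) * ((s / N) ^ ((k : ℝ) - 3 / 2) * (s / N)) := by gcongr
    _ = ((Real.sqrt N) ^ (k - 1) * (s / N) ^ ((k : ℝ) - 3 / 2)) * (s / N) := by ring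
    _ ≤ _ := by gcongr

end HeckeAux

namespace HeckeAux

lemma row_bound (D b : ℤ) (hD : 0 < D) (hne : b ^ 2 - D ≠ 0) :
    (Summable fun a : ℤ => if a ∣ b ^ 2 - D then (1 + (b : ℝ) ^ 2)⁻¹ else 0) ∧
    ∑' a : ℤ, (if a ∣ b ^ 2 - D then (1 + (b : ℝ) ^ 2)⁻¹ else 0) ≤
      2 * (8 ^ 8 * (D : ℝ)) ^ ((1:ℝ)/3) * (1 + (b : ℝ) ^ 2) ^ (-(2:ℝ)/3) := by
  set n := (b ^ 2 - D).natAbs with hn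
  have hn0 : n ≠ 0 := by simpa [hn] using hne
  set S : Finset ℤ := (n.divisors.image (fun m : ℕ => (m : ℤ))) ∪
    (n.divisors.image (fun m : ℕ => -(m : ℤ))) with hS
  have hcard : S.card ≤ 2 * n.divisors.card := by
    refine (Finset.card_union_le _ _).trans ?_
    have h1 := Finset.card_image_le (s := n.divisors) (f := fun m : ℕ => (m : ℤ))
    have h2 := Finset.card_image_le (s := n.divisors) (f := fun m : ℕ => -(m : ℤ))
    omega
  have hsupp : ∀ a ∉ S, (if a ∣ b ^ 2 - D then (1 + (b : ℝ) ^ 2)⁻¹ else 0) = 0 := by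
    intro a ha
    rw [if_neg]
    intro hdvd
    apply ha
    have hm : a.natAbs ∈ n.divisors := by
      rw [Nat.mem_divisors]
      exact ⟨Int.natAbs_dvd_natAbs.mpr hdvd, hn0⟩
    simp only [hS, Finset.mem_union, Finset.mem_image]
    rcases Int.natAbs_eq a with h | h
    · left; exact ⟨_, hm, h.symm⟩
    · right; exact ⟨_, hm, h.symm⟩
  refine ⟨summable_of_ne_finset_zero hsupp, ?_⟩
  rw [tsum_eq_sum hsupp]
  have ht : (0:ℝ) < 1 + (b : ℝ) ^ 2 := by positivity
  have hD' : (1 : ℝ) ≤ D := by exact_mod_cast hD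
  have hd : ((n.divisors.card : ℝ)) ≤ (8 ^ 8 * (D : ℝ)) ^ ((1:ℝ)/3) * (1 + (b : ℝ) ^ 2) ^ ((1:ℝ)/3) := by
    rw [← Real.mul_rpow (by positivity) ht.le]
    have h1 : ((n.divisors.card : ℝ)) ^ 3 ≤ 8 ^ 8 * D * (1 + (b : ℝ) ^ 2) := by
      have h2 : ((n.divisors.card : ℝ)) ^ 3 ≤ 8 ^ 8 * (n : ℝ) := by
        exact_mod_cast divisor_bound n hn0
      have h3 : (n : ℝ) ≤ D * (1 + (b : ℝ) ^ 2) := by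
        rw [hn, Nat.cast_natAbs]
        push_cast
        rw [abs_le]
        constructor <;> nlinarith [sq_nonneg (b : ℝ)]
      nlinarith
    calc (n.divisors.card : ℝ) = (((n.divisors.card : ℝ)) ^ 3) ^ ((1:ℝ)/3) := by
          rw [← Real.rpow_natCast, ← Real.rpow_mul (by positivity)]; norm_num
      _ ≤ _ := Real.rpow_le_rpow (by positivity) h1 (by norm_num)
  calc ∑ a ∈ S, (if a ∣ b ^ 2 - D then (1 + (b : ℝ) ^ 2)⁻¹ else 0)
      ≤ ∑ a ∈ S, (1 + (b : ℝ) ^ 2)⁻¹ := by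
        apply Finset.sum_le_sum
        intro a _
        split_ifs
        · exact le_rfl
        · positivity
    _ = (S.card : ℝ) * (1 + (b : ℝ) ^ 2)⁻¹ := by simp
    _ ≤ (2 * n.divisors.card : ℝ) * (1 + (b : ℝ) ^ 2)⁻¹ := by
        gcongr; exact_mod_cast hcard
    _ ≤ (2 * ((8 ^ 8 * (D : ℝ)) ^ ((1:ℝ)/3) * (1 + (b : ℝ) ^ 2) ^ ((1:ℝ)/3))) *
        (1 + (b : ℝ) ^ 2)⁻¹ := by gcongr
    _ = 2 * (8 ^ 8 * (D : ℝ)) ^ ((1:ℝ)/3) *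
        ((1 + (b : ℝ) ^ 2) ^ ((1:ℝ)/3) * (1 + (b : ℝ) ^ 2)⁻¹) := by ring
    _ = _ := by
        rw [← Real.rpow_neg_one, ← Real.rpow_add ht]
        norm_num

lemma summable_b (D : ℤ) (hD : 0 < D) (hsq : ¬∃ m : ℤ, m ^ 2 = D) :
    Summable fun q : QD D => (1 + ((q : ℤ × ℤ × ℤ).2.1 : ℝ) ^ 2)⁻¹ := by
  have hne : ∀ b : ℤ, b ^ 2 - D ≠ 0 := fun b hb => hsq ⟨b, by linarith⟩
  have hsum : Summable fun x : ℤ × ℤ => if x.2 ∣ x.1 ^ 2 - D then (1 + (x.1 : ℝ) ^ 2)⁻¹ else 0 := by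
    rw [summable_prod_of_nonneg]
    · refine ⟨fun b => (row_bound D b hD (hne b)).1, ?_⟩
      have hs : Summable fun b : ℤ => 2 * (8 ^ 8 * (D : ℝ)) ^ ((1:ℝ)/3) *
          (|(b : ℝ)| ^ (-((4:ℝ)/3)) + if b = 0 then 1 else 0) := by
        apply Summable.mul_left
        apply (Real.summable_abs_int_rpow (by norm_num)).add
        apply summable_of_ne_finset_zero (s := {0})
        intro b hb
        simpa using hb
      refine Summable.of_nonneg_of_le (fun b => ?_) (fun b => ?_) hs
      · apply tsum_nonneg
        intro a
        split_ifs <;> positivity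
      · refine (row_bound D b hD (hne b)).2.trans ?_
        have hD' : (0 : ℝ) < D := by exact_mod_cast hD
        apply mul_le_mul_of_nonneg_left _ (by positivity)
        by_cases hb : b = 0
        · subst hb
          simp
        · have hb' : (0:ℝ) < |(b : ℝ)| := by
            rw [abs_pos]; exact_mod_cast hb
          rw [if_neg hb, add_zero]
          calc (1 + (b : ℝ) ^ 2) ^ (-(2:ℝ)/3) ≤ (|(b : ℝ)| ^ 2) ^ (-(2:ℝ)/3) := by
                apply Real.rpow_le_rpow_of_nonpos (by positivity)
                · rw [sq_abs]; linarith
                · norm_num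
            _ = |(b : ℝ)| ^ (-((4:ℝ)/3)) := by
                rw [← Real.rpow_natCast, ← Real.rpow_mul hb'.le]; norm_num
    · intro x
      dsimp only [Pi.zero_apply]
      split_ifs <;> positivity
  let g : QD D → ℤ × ℤ := fun q => ((q : ℤ × ℤ × ℤ).2.1, (q : ℤ × ℤ × ℤ).1)
  have hg : Function.Injective g := by
    rintro ⟨⟨a, b, c⟩, h⟩ ⟨⟨a', b', c'⟩, h'⟩ hh
    simp only [g, Prod.mk.injEq] at hh
    obtain ⟨rfl, rfl⟩ := hh
    have h1 : b ^ 2 - 4 * a * c = D := h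
    have h2 : b ^ 2 - 4 * a * c' = D := h'
    have ha : a ≠ 0 := by
      rintro rfl
      exact hsq ⟨b, by linarith⟩
    have h3 : a * c = a * c' := by linarith
    have := mul_left_cancel₀ ha h3
    subst this
    rfl
  refine (hsum.comp_injective hg).congr fun q => ?_
  obtain ⟨⟨a, b, c⟩, h⟩ := q
  have h1 : b ^ 2 - 4 * a * c = D := h
  simp only [Function.comp, g]
  rw [if_pos]
  exact ⟨4 * c, by linarith⟩

lemma summable_F (k : ℕ) (hk : 2 ≤ k) (D : ℤ) (hD : 0 < D) (hsq : ¬∃ m : ℤ, m ^ 2 = D)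
    (τ : ℂ) (hτ : 0 < τ.im) : Summable fun q : QD D => Fsummand k D τ (q : ℤ × ℤ × ℤ) := by
  have hD' : (0 : ℝ) < D := by exact_mod_cast hD
  set M : ℝ := 1 / τ.im + 2 * |τ.re| / τ.im ^ 2 with hM
  have hM0 : 0 < M := by positivity
  set s : ℝ := D * τ.im ^ 2 with hs
  have hs0 : 0 < s := by positivity
  have hb := (summable_b D hD hsq).mul_left ((Real.sqrt s) ^ (k - 1) * (s * (1 / s + M ^ 2)))
  refine Summable.of_norm_bounded hb fun q => ?_
  obtain ⟨q, hq⟩ := q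
  refine (Fsummand_bound k hk D hD τ hτ q hq).trans ?_
  have hN := normSq_Qval q D hq τ
  rw [← hs] at hN ⊢
  set N := Complex.normSq (Qval q τ) with hNdef
  have hNs : s ≤ N := by rw [hN]; nlinarith [sq_nonneg (Qell q τ)]
  have hN0 : 0 < N := by linarith
  have hQ0 := norm_nonneg (Qval q τ)
  have hNn : N = ‖Qval q τ‖ ^ 2 := by rw [hNdef, Complex.normSq_eq_norm_sq]
  have hre : |(Qval q τ).re| ≤ ‖Qval q τ‖ := Complex.abs_re_le_norm _
  have him : |(Qval q τ).im| ≤ ‖Qval q τ‖ := Complex.abs_im_le_norm _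
  have hell : |Qell q τ| ≤ ‖Qval q τ‖ := by
    apply abs_le_of_sq_le_sq _ hQ0
    rw [← hNn, hN]; linarith
  have e1 : Qell q τ - (Qval q τ).re = 2 * q.1 * τ.im ^ 2 := by
    simp only [Qval, Qell, Complex.normSq_apply, Complex.add_re, Complex.mul_re,
      Complex.mul_im, pow_two, Complex.intCast_re, Complex.intCast_im]
    ring
  have e2 : (Qval q τ).im = τ.im * (2 * q.1 * τ.re + q.2.1) := by
    simp only [Qval, Complex.add_im, Complex.mul_re,
      Complex.mul_im, pow_two, Complex.intCast_re, Complex.intCast_im]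
    ring
  have ha : |(q.1 : ℝ)| ≤ ‖Qval q τ‖ / τ.im ^ 2 := by
    rw [le_div_iff₀ (by positivity)]
    have h1 : |2 * (q.1 : ℝ) * τ.im ^ 2| ≤ ‖Qval q τ‖ + ‖Qval q τ‖ := by
      rw [← e1]
      exact (abs_sub _ _).trans (add_le_add hell hre)
    rw [abs_mul, abs_mul, abs_of_pos (by norm_num : (0:ℝ) < 2),
      abs_of_pos (by positivity : 0 < τ.im ^ 2)] at h1
    linarith
  have hbb : |(q.2.1 : ℝ)| ≤ M * ‖Qval q τ‖ := by
    have h1 : |2 * (q.1 : ℝ) * τ.re + q.2.1| ≤ ‖Qval q τ‖ / τ.im := by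
      rw [le_div_iff₀ hτ]
      rw [e2, abs_mul, abs_of_pos hτ] at him
      linarith
    have h2 : |(q.2.1 : ℝ)| ≤ |2 * (q.1 : ℝ) * τ.re + q.2.1| + |2 * (q.1 : ℝ) * τ.re| := by
      have := abs_sub (2 * (q.1 : ℝ) * τ.re + q.2.1) (2 * (q.1 : ℝ) * τ.re)
      simpa using this
    have h3 : |2 * (q.1 : ℝ) * τ.re| ≤ 2 * (‖Qval q τ‖ / τ.im ^ 2) * |τ.re| := by
      rw [abs_mul, abs_mul, abs_of_pos (by norm_num : (0:ℝ) < 2)]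
      gcongr
    calc _ ≤ ‖Qval q τ‖ / τ.im + 2 * (‖Qval q τ‖ / τ.im ^ 2) * |τ.re| := by linarith
      _ = _ := by rw [hM]; ring
  have hb2 : (q.2.1 : ℝ) ^ 2 ≤ M ^ 2 * N := by
    rw [hNn, ← mul_pow, ← sq_abs]
    gcongr
  have hfin : N⁻¹ ≤ (1 / s + M ^ 2) * (1 + (q.2.1 : ℝ) ^ 2)⁻¹ := by
    rw [← div_eq_mul_inv, le_div_iff₀ (by positivity), inv_mul_le_iff₀ hN0]
    have : 1 ≤ N * (1 / s) := by rw [mul_one_div, le_div_iff₀ hs0]; linarith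
    nlinarith
  calc Real.sqrt s ^ (k - 1) * (s / N) = (Real.sqrt s ^ (k - 1) * s) * N⁻¹ := by
        rw [div_eq_mul_inv]; ring
    _ ≤ (Real.sqrt s ^ (k - 1) * s) * ((1 / s + M ^ 2) * (1 + (q.2.1 : ℝ) ^ 2)⁻¹) :=
        mul_le_mul_of_nonneg_left hfin (by positivity)
    _ = _ := by ring

end HeckeAux

namespace HeckeAux

lemma legSym_odd (D : ℤ) (p : ℕ) [Fact p.Prime] (h2 : p ≠ 2) : legSym D p = legendreSym p D := by
  unfold legSym
  by_cases h : (p : ℤ) ∣ D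
  · rw [if_pos h, eq_comm, legendreSym.eq_zero_iff]
    exact (ZMod.intCast_zmod_eq_zero_iff_dvd D p).mpr h
  · have h0 : (D : ZMod p) ≠ 0 := fun hh => h ((ZMod.intCast_zmod_eq_zero_iff_dvd D p).mp hh)
    rw [if_neg h, if_neg h2]
    by_cases hm : ∃ m : ℤ, (p : ℤ) ∣ (m ^ 2 - D)
    · rw [if_pos hm, eq_comm, legendreSym.eq_one_iff p h0]
      obtain ⟨m, hm⟩ := hm
      have := (ZMod.intCast_zmod_eq_zero_iff_dvd _ p).mpr hm
      push_cast at this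
      exact ⟨m, by linear_combination -this⟩
    · rw [if_neg hm, eq_comm, legendreSym.eq_neg_one_iff p]
      rintro ⟨x, hx⟩
      obtain ⟨m, rfl⟩ := ZMod.intCast_surjective x
      apply hm
      refine ⟨m, (ZMod.intCast_zmod_eq_zero_iff_dvd _ p).mp ?_⟩
      push_cast
      linear_combination -hx

/-- Unique residue solving a linear congruence. -/
lemma unique_linear (p : ℕ) [hp : Fact p.Prime] (u v : ℤ) (hu : ¬ (p : ℤ) ∣ u) :
    ∃ r₀ < p, ∀ r < p, (p : ℤ) ∣ v - u * (r : ℤ) ↔ r = r₀ := by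
  have hu0 : (u : ZMod p) ≠ 0 := fun hh => hu ((ZMod.intCast_zmod_eq_zero_iff_dvd u p).mp hh)
  refine ⟨((v : ZMod p) / u).val, ZMod.val_lt _, fun r hr => ?_⟩
  rw [← ZMod.intCast_zmod_eq_zero_iff_dvd]
  push_cast
  rw [sub_eq_zero]
  constructor
  · intro h
    rw [h, mul_div_cancel_left₀ _ hu0, ZMod.val_natCast_of_lt hr]
  · rintro rfl
    rw [ZMod.natCast_zmod_val, mul_div_cancel₀ _ hu0]

lemma sum_unique (p : ℕ) (P : ℕ → Prop) [DecidablePred P] (r₀ : ℕ) (h0 : r₀ < p)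
    (h : ∀ r < p, P r ↔ r = r₀) : ∑ r ∈ Finset.range p, (if P r then (1 : ℤ) else 0) = 1 := by
  rw [Finset.sum_eq_single r₀]
  · rw [if_pos ((h r₀ h0).mpr rfl)]
  · intro r hr hne
    rw [if_neg]
    rw [h r (Finset.mem_range.mp hr)]; exact hne
  · intro hr
    exact absurd (Finset.mem_range.mpr h0) hr

lemma sum_none (p : ℕ) (P : ℕ → Prop) [DecidablePred P]
    (h : ∀ r < p, ¬ P r) : ∑ r ∈ Finset.range p, (if P r then (1 : ℤ) else 0) = 0 := by
  apply Finset.sum_eq_zero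
  intro r hr
  rw [if_neg (h r (Finset.mem_range.mp hr))]

/-- Number of projective roots of a form that is nonzero mod `p`. -/
lemma roots_two (a b c D : ℤ) (h : b ^ 2 - 4 * a * c = D)
    (hn : ¬ ((2 : ℤ) ∣ a ∧ (2 : ℤ) ∣ b ∧ (2 : ℤ) ∣ c)) :
    (if (2 : ℤ) ∣ a then (1 : ℤ) else 0) +
      ∑ r ∈ Finset.range 2, (if (2 : ℤ) ∣ c - b * (r : ℤ) + a * (r : ℤ) ^ 2 then (1 : ℤ) else 0) =
      1 + legSym D 2 := by
  rw [Finset.sum_range_succ, Finset.sum_range_one]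
  simp only [legSym, Nat.cast_zero, Nat.cast_one, Nat.cast_ofNat, if_true]
  have e0 : c - b * 0 + a * 0 ^ 2 = c := by ring
  have e1 : c - b * 1 + a * 1 ^ 2 = c - b + a := by ring
  rw [e0, e1]
  rcases Int.even_or_odd' b with ⟨b', rfl | rfl⟩
  · have hD : (2 : ℤ) ∣ D := ⟨2 * b' ^ 2 - 2 * a * c, by rw [← h]; ring⟩
    rw [if_pos hD]
    split_ifs <;> omega
  · obtain ⟨t, ht⟩ : ∃ t, b' * (b' + 1) = 2 * t := by
      obtain ⟨t, ht⟩ := Int.even_mul_succ_self b'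
      exact ⟨t, by rw [ht]; ring⟩
    have hD : D = 8 * t + 1 - 4 * (a * c) := by rw [← h]; linear_combination 4 * ht
    rcases Int.even_or_odd' a with ⟨a', rfl | rfl⟩
    · have : D = 8 * (t - a' * c) + 1 := by rw [hD]; ring
      split_ifs <;> omega
    · rcases Int.even_or_odd' c with ⟨c', rfl | rfl⟩
      · have : D = 8 * (t - (2 * a' + 1) * c') + 1 := by rw [hD]; ring
        split_ifs <;> omega
      · have : D = 8 * t - 16 * (a' * c') - 8 * a' - 8 * c' - 3 := by rw [hD]; ring
        split_ifs <;> omega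

lemma roots_odd (p : ℕ) [hp : Fact p.Prime] (h2 : p ≠ 2) (a b c D : ℤ)
    (h : b ^ 2 - 4 * a * c = D)
    (hn : ¬ ((p : ℤ) ∣ a ∧ (p : ℤ) ∣ b ∧ (p : ℤ) ∣ c)) :
    (if (p : ℤ) ∣ a then (1 : ℤ) else 0) +
      ∑ r ∈ Finset.range p, (if (p : ℤ) ∣ c - b * (r : ℤ) + a * (r : ℤ) ^ 2 then (1 : ℤ) else 0) =
      1 + legSym D p := by
  have hpi : Prime (p : ℤ) := Nat.prime_iff_prime_int.mp hp.out
  by_cases ha : (p : ℤ) ∣ a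
  · rw [if_pos ha]
    have hq : ∀ r : ℕ, (p : ℤ) ∣ c - b * (r : ℤ) + a * (r : ℤ) ^ 2 ↔ (p : ℤ) ∣ c - b * (r : ℤ) := by
      intro r
      exact dvd_add_left (ha.mul_right _)
    by_cases hb : (p : ℤ) ∣ b
    · have hD : (p : ℤ) ∣ D := by
        rw [← h]
        exact dvd_sub (dvd_pow hb two_ne_zero) ((ha.mul_left 4).mul_right c)
      have hc : ¬ (p : ℤ) ∣ c := fun hc => hn ⟨ha, hb, hc⟩
      rw [sum_none, legSym, if_pos hD]
      intro r _
      rw [hq, dvd_sub_left (hb.mul_right _)]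
      exact hc
    · have hDb : (p : ℤ) ∣ b ^ 2 - D := ⟨4 * (a / p) * c, by
        obtain ⟨a', rfl⟩ := ha
        rw [Int.mul_ediv_cancel_left _ hpi.ne_zero, ← h]; ring⟩
      have hD : ¬ (p : ℤ) ∣ D := by
        intro hD
        have := dvd_add hDb hD
        rw [sub_add_cancel] at this
        exact hb (hpi.dvd_of_dvd_pow this)
      obtain ⟨r₀, h0, hr⟩ := unique_linear p b c hb
      rw [sum_unique p _ r₀ h0 (fun r hlt => (hq r).trans (hr r hlt)), legSym, if_neg hD, if_neg h2,
        if_pos ⟨b, hDb⟩]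
  · rw [if_neg ha, zero_add, legSym_odd D p h2, add_comm, ← legendreSym.card_sqrts p h2 D,
      Finset.sum_boole]
    norm_cast
    have h2a : (2 * a : ZMod p) ≠ 0 := by
      intro hh
      have : ((2 * a : ℤ) : ZMod p) = 0 := by push_cast; exact hh
      rw [ZMod.intCast_zmod_eq_zero_iff_dvd] at this
      rcases hpi.dvd_or_dvd this with h3 | h3
      · have : p ∣ 2 := by exact_mod_cast h3
        exact h2 ((Nat.prime_dvd_prime_iff_eq hp.out Nat.prime_two).mp this)
      · exact ha h3
    have hDz : (D : ZMod p) = b ^ 2 - 4 * a * c := by rw [← h]; push_cast; ring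
    have ha0 : (a : ZMod p) ≠ 0 := right_ne_zero_of_mul h2a
    have h20 : (2 : ZMod p) ≠ 0 := left_ne_zero_of_mul h2a
    refine Finset.card_bij (fun r _ => (2 * a * (r : ZMod p) - b : ZMod p)) ?_ ?_ ?_
    · intro r hr
      rw [Finset.mem_filter, ← ZMod.intCast_zmod_eq_zero_iff_dvd] at hr
      have hr2 := hr.2
      push_cast at hr2
      simp only [Set.mem_toFinset, Set.mem_ofPred_eq, hDz]
      linear_combination 4 * a * hr2
    · intro r hr s hs hrs
      rw [Finset.mem_filter, Finset.mem_range] at hr hs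
      have h3 : (2 * a : ZMod p) * r = 2 * a * s := by linear_combination hrs
      have h4 := mul_left_cancel₀ h2a h3
      rw [← ZMod.val_natCast_of_lt hr.1, ← ZMod.val_natCast_of_lt hs.1, h4]
    · intro x hx
      simp only [Set.mem_toFinset, Set.mem_ofPred_eq, hDz] at hx
      refine ⟨((x + b) / (2 * a)).val, ?_, ?_⟩
      · rw [Finset.mem_filter, Finset.mem_range, ← ZMod.intCast_zmod_eq_zero_iff_dvd]
        refine ⟨ZMod.val_lt _, ?_⟩
        push_cast
        rw [ZMod.natCast_zmod_val]
        have h3 : (2 * a : ZMod p) * ((x + b) / (2 * a)) = x + b := mul_div_cancel₀ _ h2a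
        set y := (x + b) / (2 * a : ZMod p)
        have h4 : (4 * a : ZMod p) * (c - b * y + a * y ^ 2) = 0 := by
          have hx' : x = 2 * a * y - b := by rw [h3]; ring
          rw [hx'] at hx
          linear_combination hx
        rcases mul_eq_zero.mp h4 with h5 | h5
        · exfalso
          have : (2 * (2 * a) : ZMod p) = 0 := by linear_combination h5
          exact (mul_ne_zero h20 h2a) this
        · exact h5
      · rw [ZMod.natCast_zmod_val, mul_div_cancel₀ _ h2a]
        ring

lemma roots_all (p : ℕ) (hp : p.Prime) (a b c D : ℤ)
    (h : b ^ 2 - 4 * a * c = D)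
    (hn : ¬ ((p : ℤ) ∣ a ∧ (p : ℤ) ∣ b ∧ (p : ℤ) ∣ c)) :
    (if (p : ℤ) ∣ a then (1 : ℤ) else 0) +
      ∑ r ∈ Finset.range p, (if (p : ℤ) ∣ c - b * (r : ℤ) + a * (r : ℤ) ^ 2 then (1 : ℤ) else 0) =
      1 + legSym D p := by
  by_cases h2 : p = 2
  · subst h2
    exact roots_two a b c D h hn
  · have : Fact p.Prime := ⟨hp⟩
    exact roots_odd p h2 a b c D h hn

/-- Case of forms of discriminant `D p²` that are not divisible by `p`. -/
lemma count_prim_two (A B C D : ℤ) (hD4 : D % 4 = 0 ∨ D % 4 = 1)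
    (h : B ^ 2 - 4 * A * C = D * 2 ^ 2)
    (hn : ¬ ((2 : ℤ) ∣ A ∧ (2 : ℤ) ∣ B ∧ (2 : ℤ) ∣ C)) :
    (if (2 : ℤ) ^ 2 ∣ A ∧ (2 : ℤ) ∣ B then (1 : ℤ) else 0) +
      ∑ r ∈ Finset.range 2, (if (2 : ℤ) ∣ B - 2 * A * (r : ℤ) ∧
        (2 : ℤ) ^ 2 ∣ C - B * (r : ℤ) + A * (r : ℤ) ^ 2 then (1 : ℤ) else 0) = 1 := by
  rw [Finset.sum_range_succ, Finset.sum_range_one]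
  have hB : (2 : ℤ) ∣ B := by
    apply Int.prime_two.dvd_of_dvd_pow (n := 2)
    exact ⟨2 * A * C + 2 * D, by linear_combination h⟩
  obtain ⟨β, rfl⟩ := hB
  have h' : β ^ 2 - A * C = D := by linarith
  simp only [Nat.cast_zero, Nat.cast_one]
  have hsq : ∀ x : ℤ, x ^ 2 % 4 = 0 ∧ x % 2 = 0 ∨ x ^ 2 % 4 = 1 ∧ x % 2 = 1 := by
    intro x
    rcases Int.even_or_odd' x with ⟨y, rfl | rfl⟩
    · left
      have : (2 * y) ^ 2 = 4 * y ^ 2 := by ring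
      omega
    · right
      have : (2 * y + 1) ^ 2 = 4 * (y ^ 2 + y) + 1 := by ring
      omega
  have hβ := hsq β
  rcases Int.even_or_odd' A with ⟨a, rfl | rfl⟩
  · rcases Int.even_or_odd' C with ⟨c, rfl | rfl⟩
    · exact absurd ⟨⟨a, rfl⟩, ⟨β, rfl⟩, ⟨c, rfl⟩⟩ hn
    · have e : (2 * a) * (2 * c + 1) = 4 * (a * c) + 2 * a := by ring
      split_ifs <;> omega
  · have k1 : (2 * a + 1) * C = β ^ 2 - D := by linarith
    have k2 : (2 * a + 1) * (C - 2 * β + (2 * a + 1)) = (2 * a + 1 - β) ^ 2 - D := by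
      linear_combination k1
    have hβ2 := hsq (2 * a + 1 - β)
    have hodd : IsCoprime ((2 : ℤ) ^ 2) (2 * a + 1) := by
      apply IsCoprime.pow_left
      exact ⟨-a, 1, by ring⟩
    have d1 : (2 : ℤ) ^ 2 ∣ C ↔ (2 : ℤ) ^ 2 ∣ β ^ 2 - D := by
      rw [← k1]; exact ⟨fun hh => hh.mul_left _, fun hh => hodd.dvd_of_dvd_mul_left hh⟩
    have d2 : (2 : ℤ) ^ 2 ∣ (C - 2 * β + (2 * a + 1)) ↔ (2 : ℤ) ^ 2 ∣ (2 * a + 1 - β) ^ 2 - D := by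
      rw [← k2]; exact ⟨fun hh => hh.mul_left _, fun hh => hodd.dvd_of_dvd_mul_left hh⟩
    have f1 : C - 2 * β * 0 + (2 * a + 1) * 0 ^ 2 = C := by ring
    have f2 : C - 2 * β * 1 + (2 * a + 1) * 1 ^ 2 = C - 2 * β + (2 * a + 1) := by ring
    simp only [f1, f2, d1, d2]
    split_ifs <;> omega

lemma count_prim_odd (p : ℕ) [hp : Fact p.Prime] (h2 : p ≠ 2) (A B C D : ℤ)
    (h : B ^ 2 - 4 * A * C = D * (p : ℤ) ^ 2)
    (hn : ¬ ((p : ℤ) ∣ A ∧ (p : ℤ) ∣ B ∧ (p : ℤ) ∣ C)) :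
    (if (p : ℤ) ^ 2 ∣ A ∧ (p : ℤ) ∣ B then (1 : ℤ) else 0) +
      ∑ r ∈ Finset.range p, (if (p : ℤ) ∣ B - 2 * A * (r : ℤ) ∧
        (p : ℤ) ^ 2 ∣ C - B * (r : ℤ) + A * (r : ℤ) ^ 2 then (1 : ℤ) else 0) = 1 := by
  have hpi : Prime (p : ℤ) := Nat.prime_iff_prime_int.mp hp.out
  have hp2 : ¬ (p : ℤ) ∣ 2 := by
    intro h3
    have : p ∣ 2 := by exact_mod_cast h3
    exact h2 ((Nat.prime_dvd_prime_iff_eq hp.out Nat.prime_two).mp this)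
  have hp4 : ¬ (p : ℤ) ∣ 4 := by
    intro h3
    exact hp2 (hpi.dvd_of_dvd_pow (n := 2) (by norm_num; exact h3))
  have hcop : ∀ u : ℤ, ¬ (p : ℤ) ∣ u → IsCoprime ((p : ℤ) ^ 2) u := fun u hu =>
    ((Prime.coprime_iff_not_dvd hpi).mpr hu).pow_left
  by_cases hA : (p : ℤ) ∣ A
  · have hB : (p : ℤ) ∣ B := by
      apply hpi.dvd_of_dvd_pow (n := 2)
      have : B ^ 2 = 4 * A * C + D * (p : ℤ) ^ 2 := by linarith
      rw [this]
      exact dvd_add ((hA.mul_left 4).mul_right C) ((dvd_pow_self _ two_ne_zero).mul_left _)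
    have hC : ¬ (p : ℤ) ∣ C := fun hC => hn ⟨hA, hB, hC⟩
    have h4C : ¬ (p : ℤ) ∣ 4 * C := by
      intro hh
      rcases hpi.dvd_or_dvd hh with h3 | h3
      · exact hp4 h3
      · exact hC h3
    have hA2 : (p : ℤ) ^ 2 ∣ A := by
      apply (hcop _ h4C).dvd_of_dvd_mul_left
      have : 4 * C * A = B ^ 2 - D * (p : ℤ) ^ 2 := by linarith
      rw [this]
      exact dvd_sub (pow_dvd_pow_of_dvd hB 2) (dvd_mul_left _ _)
    rw [if_pos ⟨hA2, hB⟩, sum_none, add_zero]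
    rintro r _ ⟨_, hr⟩
    have h3 : (p : ℤ) ∣ C - B * (r : ℤ) + A * (r : ℤ) ^ 2 := (dvd_pow_self _ two_ne_zero).trans hr
    rw [dvd_add_left (hA.mul_right _), dvd_sub_left (hB.mul_right _)] at h3
    exact hC h3
  · rw [if_neg (fun hh => hA ((dvd_pow_self _ two_ne_zero).trans hh.1)), zero_add]
    have h2A : ¬ (p : ℤ) ∣ 2 * A := by
      intro hh
      rcases hpi.dvd_or_dvd hh with h3 | h3
      · exact hp2 h3
      · exact hA h3
    have h4A : ¬ (p : ℤ) ∣ 4 * A := by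
      intro hh
      rcases hpi.dvd_or_dvd hh with h3 | h3
      · exact hp4 h3
      · exact hA h3
    obtain ⟨r₀, h0, hr⟩ := unique_linear p (2 * A) B h2A
    refine sum_unique p _ r₀ h0 fun r hlt => ?_
    rw [← hr r hlt]
    refine and_iff_left_of_imp fun hd => ?_
    apply (hcop _ h4A).dvd_of_dvd_mul_left
    have : 4 * A * (C - B * (r : ℤ) + A * (r : ℤ) ^ 2) =
        (B - 2 * A * r) ^ 2 - D * (p : ℤ) ^ 2 := by linear_combination -h
    rw [this]
    exact dvd_sub (pow_dvd_pow_of_dvd hd 2) (dvd_mul_left _ _)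

lemma count_all (p : ℕ) (hp : p.Prime) (A B C D : ℤ) (hD4 : D % 4 = 0 ∨ D % 4 = 1)
    (h : B ^ 2 - 4 * A * C = D * (p : ℤ) ^ 2) :
    (if (p : ℤ) ^ 2 ∣ A ∧ (p : ℤ) ∣ B then (1 : ℤ) else 0) +
      ∑ r ∈ Finset.range p, (if (p : ℤ) ∣ B - 2 * A * (r : ℤ) ∧
        (p : ℤ) ^ 2 ∣ C - B * (r : ℤ) + A * (r : ℤ) ^ 2 then (1 : ℤ) else 0) =
    1 + legSym D p * (if (p : ℤ) ∣ A ∧ (p : ℤ) ∣ B ∧ (p : ℤ) ∣ C then 1 else 0) +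
      p * (if (p : ℤ) ^ 2 ∣ A ∧ (p : ℤ) ^ 2 ∣ B ∧ (p : ℤ) ^ 2 ∣ C then 1 else 0) := by
  have hp0 : (p : ℤ) ≠ 0 := by exact_mod_cast hp.ne_zero
  have hself : (p : ℤ) ∣ (p : ℤ) ^ 2 := dvd_pow_self _ two_ne_zero
  by_cases hn : (p : ℤ) ∣ A ∧ (p : ℤ) ∣ B ∧ (p : ℤ) ∣ C
  · rw [if_pos hn]
    obtain ⟨⟨a, rfl⟩, ⟨b, rfl⟩, ⟨c, rfl⟩⟩ := hn
    have h' : b ^ 2 - 4 * a * c = D := by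
      apply mul_right_cancel₀ (pow_ne_zero 2 hp0)
      linear_combination h
    have hc : ∀ x : ℤ, (p : ℤ) ^ 2 ∣ p * x ↔ (p : ℤ) ∣ x := by
      intro x
      rw [pow_two]
      exact mul_dvd_mul_iff_left hp0
    have hr : ∀ r : ℕ, ((p : ℤ) ∣ p * b - 2 * (p * a) * (r : ℤ) ∧
        (p : ℤ) ^ 2 ∣ p * c - p * b * (r : ℤ) + p * a * (r : ℤ) ^ 2) ↔
        (p : ℤ) ∣ c - b * (r : ℤ) + a * (r : ℤ) ^ 2 := by
      intro r
      rw [← hc (c - b * (r : ℤ) + a * (r : ℤ) ^ 2), show (p : ℤ) * (c - b * (r : ℤ) + a * (r : ℤ) ^ 2) =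
        p * c - p * b * (r : ℤ) + p * a * (r : ℤ) ^ 2 by ring]
      exact and_iff_right ⟨b - 2 * a * r, by ring⟩
    simp only [hr, hc, dvd_mul_right, and_true]
    by_cases hall : (p : ℤ) ∣ a ∧ (p : ℤ) ∣ b ∧ (p : ℤ) ∣ c
    · rw [if_pos hall, if_pos hall.1]
      have hD : (p : ℤ) ∣ D := by
        rw [← h']
        exact dvd_sub (dvd_pow hall.2.1 two_ne_zero) ((hall.1.mul_left 4).mul_right c)
      have : ∀ r : ℕ, (p : ℤ) ∣ c - b * (r : ℤ) + a * (r : ℤ) ^ 2 := fun r =>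
        dvd_add (dvd_sub hall.2.2 (hall.2.1.mul_right _)) (hall.1.mul_right _)
      simp only [this, if_true, legSym, if_pos hD]
      simp
    · rw [if_neg hall, roots_all p hp a b c D h' hall]
      ring
  · rw [if_neg hn, if_neg (fun hh : (p : ℤ) ^ 2 ∣ A ∧ (p : ℤ) ^ 2 ∣ B ∧ (p : ℤ) ^ 2 ∣ C => hn ⟨hself.trans hh.1, hself.trans hh.2.1, hself.trans hh.2.2⟩)]
    rw [mul_zero, mul_zero, add_zero, add_zero]
    by_cases h2 : p = 2
    · subst h2
      exact count_prim_two A B C D hD4 h hn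
    · have : Fact p.Prime := ⟨hp⟩
      exact count_prim_odd p h2 A B C D h hn

end HeckeAux

namespace HeckeAux

lemma sign_mul_left (t x : ℝ) (ht : 0 < t) : Real.sign (t * x) = Real.sign x := by
  rcases lt_trichotomy x 0 with h | h | h
  · rw [Real.sign_of_neg h, Real.sign_of_neg (mul_neg_of_pos_of_neg ht h)]
  · rw [h, mul_zero]
  · rw [Real.sign_of_pos h, Real.sign_of_pos (mul_pos ht h)]

lemma Fs_scale (k : ℕ) (D E : ℤ) (σ τ : ℂ) (q q' : ℤ × ℤ × ℤ) (t : ℝ) (ht : 0 < t)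
    (h1 : Qval q σ = (t : ℂ) * Qval q' τ) (h2 : Qell q σ = t * Qell q' τ)
    (h3 : (D : ℝ) * σ.im ^ 2 = t ^ 2 * (E * τ.im ^ 2)) :
    Fsummand k D σ q = (t : ℂ) ^ (k - 1) * Fsummand k E τ q' := by
  unfold Fsummand
  rw [h1, h2, h3, sign_mul_left t _ ht, Complex.normSq_mul, Complex.normSq_ofReal, mul_pow,
    ← pow_two, mul_div_mul_left _ _ (pow_ne_zero 2 ht.ne')]
  ring

/-- The form `Q ∘ diag(p,1)`. -/
def phiInf (p : ℕ) (q : ℤ × ℤ × ℤ) : ℤ × ℤ × ℤ := (q.1 * p ^ 2, q.2.1 * p, q.2.2)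

/-- The form `Q ∘ (1 r; 0 p)`. -/
def phiR (p r : ℕ) (q : ℤ × ℤ × ℤ) : ℤ × ℤ × ℤ :=
  (q.1, 2 * q.1 * r + q.2.1 * p, q.1 * r ^ 2 + q.2.1 * p * r + q.2.2 * p ^ 2)

/-- The form `m Q`. -/
def phiM (m : ℤ) (q : ℤ × ℤ × ℤ) : ℤ × ℤ × ℤ := (m * q.1, m * q.2.1, m * q.2.2)

lemma Fs_inf (k : ℕ) (D : ℤ) (τ : ℂ) (p : ℕ) (q : ℤ × ℤ × ℤ) :
    Fsummand k D ((p : ℂ) * τ) q = Fsummand k (D * (p : ℤ) ^ 2) τ (phiInf p q) := by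
  have := Fs_scale k D (D * (p : ℤ) ^ 2) ((p : ℂ) * τ) τ q (phiInf p q) 1 one_pos
    (by simp only [Qval, phiInf]; push_cast; ring)
    (by
      simp only [Qell, phiInf, Complex.normSq_mul, Complex.normSq_natCast, Complex.mul_re,
        Complex.natCast_re, Complex.natCast_im]
      push_cast; ring)
    (by simp only [Complex.mul_im, Complex.natCast_re, Complex.natCast_im]; push_cast; ring)
  simpa using this

lemma Fs_r (k : ℕ) (D : ℤ) (τ : ℂ) (p r : ℕ) (hp : 0 < p) (q : ℤ × ℤ × ℤ) :
    Fsummand k D ((τ + (r : ℂ)) / (p : ℂ)) q =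
      (((p : ℂ) ^ 2)⁻¹) ^ (k - 1) * Fsummand k (D * (p : ℤ) ^ 2) τ (phiR p r q) := by
  have hp' : (0 : ℝ) < p := by exact_mod_cast hp
  have hpc : (p : ℂ) ≠ 0 := by exact_mod_cast hp.ne'
  have hre : ((τ + (r : ℂ)) / (p : ℂ)).re = (τ.re + r) / p := by
    rw [Complex.div_natCast_re]; simp
  have him : ((τ + (r : ℂ)) / (p : ℂ)).im = τ.im / p := by
    rw [Complex.div_natCast_im]; simp
  have := Fs_scale k D (D * (p : ℤ) ^ 2) ((τ + (r : ℂ)) / (p : ℂ)) τ q (phiR p r q)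
    (((p : ℝ) ^ 2)⁻¹) (by positivity)
    (by simp only [Qval, phiR]; push_cast; field_simp; ring)
    (by
      simp only [Qell, phiR, Complex.normSq_apply, hre, him]
      push_cast; field_simp; ring)
    (by rw [him]; push_cast; field_simp)
  rw [this]
  push_cast
  rfl

lemma Fs_m (k : ℕ) (D : ℤ) (τ : ℂ) (m : ℤ) (hm : 0 < m) (q : ℤ × ℤ × ℤ) :
    Fsummand k (D * m ^ 2) τ (phiM m q) = (m : ℂ) ^ (k - 1) * Fsummand k D τ q := by
  have hm' : (0 : ℝ) < m := by exact_mod_cast hm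
  have := Fs_scale k (D * m ^ 2) D τ τ (phiM m q) q m hm'
    (by simp only [Qval, phiM]; push_cast; ring)
    (by simp only [Qell, phiM]; push_cast; ring)
    (by push_cast; ring)
  rw [this]
  push_cast
  rfl

lemma tsum_img (φ : ℤ × ℤ × ℤ → ℤ × ℤ × ℤ) (D E : ℤ) (P : ℤ × ℤ × ℤ → Prop) [DecidablePred P]
    (hinj : Function.Injective φ) (hmem : ∀ q ∈ QD D, φ q ∈ QD E ∧ P (φ q))
    (hsurj : ∀ Q ∈ QD E, P Q → ∃ q ∈ QD D, φ q = Q) (H : ℤ × ℤ × ℤ → ℂ) :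
    ∑' q : QD D, H (φ q) = ∑' Q : QD E, if P Q then H Q else 0 := by
  let g : QD D → QD E := fun q => ⟨φ q, (hmem q q.2).1⟩
  have hg : Function.Injective g := fun x y hxy => Subtype.ext (hinj (congrArg Subtype.val hxy))
  rw [← hg.tsum_eq (f := fun Q : QD E => if P Q then H Q else 0)]
  · apply tsum_congr
    intro q
    simp only [g]
    rw [if_pos (hmem q q.2).2]
  · rintro ⟨Q, hQ⟩ hs
    have hP : P Q := by
      by_contra hP
      exact hs (by simp [hP])
    obtain ⟨q, hq, rfl⟩ := hsurj Q hQ hP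
    exact ⟨⟨q, hq⟩, rfl⟩

lemma tsum_inf (D : ℤ) (p : ℕ) (hp : 0 < p) (H : ℤ × ℤ × ℤ → ℂ) :
    ∑' q : QD D, H (phiInf p q) = ∑' Q : QD (D * (p : ℤ) ^ 2),
      if (p : ℤ) ^ 2 ∣ (Q : ℤ × ℤ × ℤ).1 ∧ (p : ℤ) ∣ (Q : ℤ × ℤ × ℤ).2.1 then H Q else 0 := by
  have hp0 : (p : ℤ) ≠ 0 := by exact_mod_cast hp.ne'
  refine tsum_img (phiInf p) D _ (fun Q => (p : ℤ) ^ 2 ∣ Q.1 ∧ (p : ℤ) ∣ Q.2.1) ?_ ?_ ?_ H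
  · rintro ⟨a, b, c⟩ ⟨a', b', c'⟩ h
    simp only [phiInf, Prod.mk.injEq] at h
    obtain ⟨h1, h2, h3⟩ := h
    rw [mul_right_cancel₀ (pow_ne_zero 2 hp0) h1, mul_right_cancel₀ hp0 h2, h3]
  · rintro ⟨a, b, c⟩ h
    have h' : b ^ 2 - 4 * a * c = D := h
    refine ⟨?_, dvd_mul_left _ _, dvd_mul_left _ _⟩
    change (b * p) ^ 2 - 4 * (a * p ^ 2) * c = D * (p : ℤ) ^ 2
    rw [← h']; ring
  · rintro ⟨A, B, C⟩ h ⟨⟨a, ha⟩, ⟨b, hb⟩⟩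
    have h' : B ^ 2 - 4 * A * C = D * (p : ℤ) ^ 2 := h
    dsimp only at ha hb
    subst ha hb
    refine ⟨(a, b, C), ?_, ?_⟩
    · change b ^ 2 - 4 * a * C = D
      apply mul_right_cancel₀ (pow_ne_zero 2 hp0)
      linear_combination h'
    · simp only [phiInf, Prod.mk.injEq]
      exact ⟨by ring, by ring, trivial⟩

lemma tsum_r (D : ℤ) (p r : ℕ) (hp : 0 < p) (H : ℤ × ℤ × ℤ → ℂ) :
    ∑' q : QD D, H (phiR p r q) = ∑' Q : QD (D * (p : ℤ) ^ 2),
      if (p : ℤ) ∣ (Q : ℤ × ℤ × ℤ).2.1 - 2 * (Q : ℤ × ℤ × ℤ).1 * (r : ℤ) ∧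
        (p : ℤ) ^ 2 ∣ (Q : ℤ × ℤ × ℤ).2.2 - (Q : ℤ × ℤ × ℤ).2.1 * (r : ℤ) +
          (Q : ℤ × ℤ × ℤ).1 * (r : ℤ) ^ 2 then H Q else 0 := by
  have hp0 : (p : ℤ) ≠ 0 := by exact_mod_cast hp.ne'
  refine tsum_img (phiR p r) D _ (fun Q => (p : ℤ) ∣ Q.2.1 - 2 * Q.1 * (r : ℤ) ∧
        (p : ℤ) ^ 2 ∣ Q.2.2 - Q.2.1 * (r : ℤ) + Q.1 * (r : ℤ) ^ 2) ?_ ?_ ?_ H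
  · rintro ⟨a, b, c⟩ ⟨a', b', c'⟩ h
    simp only [phiR, Prod.mk.injEq] at h
    obtain ⟨h1, h2, h3⟩ := h
    subst h1
    have hb : b = b' := mul_right_cancel₀ hp0 (by linarith)
    subst hb
    have hc : c = c' := mul_right_cancel₀ (pow_ne_zero 2 hp0) (by linarith)
    rw [hc]
  · rintro ⟨a, b, c⟩ h
    have h' : b ^ 2 - 4 * a * c = D := h
    refine ⟨?_, ⟨b, ?_⟩, ⟨c, ?_⟩⟩
    · change (2 * a * r + b * p) ^ 2 - 4 * a * (a * r ^ 2 + b * p * r + c * p ^ 2) = D * (p : ℤ) ^ 2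
      rw [← h']; ring
    · simp only [phiR]; ring
    · simp only [phiR]; ring
  · rintro ⟨A, B, C⟩ h ⟨⟨b, hb⟩, ⟨c, hc⟩⟩
    have h' : B ^ 2 - 4 * A * C = D * (p : ℤ) ^ 2 := h
    dsimp only at hb hc
    have hB : B = 2 * A * r + b * p := by linarith
    have hC : C = A * r ^ 2 + b * p * r + c * p ^ 2 := by rw [hB] at hc; linarith
    subst hB hC
    refine ⟨(A, b, c), ?_, rfl⟩
    change b ^ 2 - 4 * A * c = D
    apply mul_right_cancel₀ (pow_ne_zero 2 hp0)
    linear_combination h'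

lemma tsum_m (D E : ℤ) (m : ℤ) (hm : 0 < m) (hE : E = D * m ^ 2) (H : ℤ × ℤ × ℤ → ℂ) :
    ∑' q : QD D, H (phiM m q) = ∑' Q : QD E,
      if m ∣ (Q : ℤ × ℤ × ℤ).1 ∧ m ∣ (Q : ℤ × ℤ × ℤ).2.1 ∧ m ∣ (Q : ℤ × ℤ × ℤ).2.2
      then H Q else 0 := by
  have hm0 : m ≠ 0 := hm.ne'
  refine tsum_img (phiM m) D _ (fun Q => m ∣ Q.1 ∧ m ∣ Q.2.1 ∧ m ∣ Q.2.2) ?_ ?_ ?_ H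
  · rintro ⟨a, b, c⟩ ⟨a', b', c'⟩ h
    simp only [phiM, Prod.mk.injEq] at h
    obtain ⟨h1, h2, h3⟩ := h
    rw [mul_left_cancel₀ hm0 h1, mul_left_cancel₀ hm0 h2, mul_left_cancel₀ hm0 h3]
  · rintro ⟨a, b, c⟩ h
    have h' : b ^ 2 - 4 * a * c = D := h
    refine ⟨?_, dvd_mul_right _ _, dvd_mul_right _ _, dvd_mul_right _ _⟩
    change (m * b) ^ 2 - 4 * (m * a) * (m * c) = E
    rw [hE, ← h']; ring
  · rintro ⟨A, B, C⟩ h ⟨⟨a, ha⟩, ⟨b, hb⟩, ⟨c, hc⟩⟩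
    have h' : B ^ 2 - 4 * A * C = E := h
    dsimp only at ha hb hc
    subst ha hb hc
    refine ⟨(a, b, c), ?_, rfl⟩
    change b ^ 2 - 4 * a * c = D
    apply mul_right_cancel₀ (pow_ne_zero 2 hm0)
    rw [hE] at h'
    linear_combination h'

lemma summable_ite {ι : Type*} (f : ι → ℂ) (hf : Summable f) (P : ι → Prop) [DecidablePred P] :
    Summable fun i => if P i then f i else 0 := by
  refine Summable.of_norm_bounded hf.norm fun i => ?_
  split_ifs
  · exact le_rfl
  · simp

lemma ite_mul_cast (P : Prop) [Decidable P] (z : ℂ) :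
    (if P then z else 0) = ((if P then (1 : ℤ) else 0 : ℤ) : ℂ) * z := by
  split_ifs <;> simp

lemma main_identity (D : ℤ) (hD4 : D % 4 = 0 ∨ D % 4 = 1) (p : ℕ) (hp : p.Prime)
    (H : ℤ × ℤ × ℤ → ℂ) (hH : Summable fun Q : QD (D * (p : ℤ) ^ 2) => H Q) :
    (∑' Q : QD (D * (p : ℤ) ^ 2),
      if (p : ℤ) ^ 2 ∣ (Q : ℤ × ℤ × ℤ).1 ∧ (p : ℤ) ∣ (Q : ℤ × ℤ × ℤ).2.1 then H Q else 0) +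
    ∑ r ∈ Finset.range p, (∑' Q : QD (D * (p : ℤ) ^ 2),
      if (p : ℤ) ∣ (Q : ℤ × ℤ × ℤ).2.1 - 2 * (Q : ℤ × ℤ × ℤ).1 * (r : ℤ) ∧
        (p : ℤ) ^ 2 ∣ (Q : ℤ × ℤ × ℤ).2.2 - (Q : ℤ × ℤ × ℤ).2.1 * (r : ℤ) +
          (Q : ℤ × ℤ × ℤ).1 * (r : ℤ) ^ 2 then H Q else 0) =
    (∑' Q : QD (D * (p : ℤ) ^ 2), H Q) +
    (legSym D p : ℂ) * (∑' Q : QD (D * (p : ℤ) ^ 2), if (p : ℤ) ∣ (Q : ℤ × ℤ × ℤ).1 ∧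
      (p : ℤ) ∣ (Q : ℤ × ℤ × ℤ).2.1 ∧ (p : ℤ) ∣ (Q : ℤ × ℤ × ℤ).2.2 then H Q else 0) +
    (p : ℂ) * (∑' Q : QD (D * (p : ℤ) ^ 2), if (p : ℤ) ^ 2 ∣ (Q : ℤ × ℤ × ℤ).1 ∧
      (p : ℤ) ^ 2 ∣ (Q : ℤ × ℤ × ℤ).2.1 ∧ (p : ℤ) ^ 2 ∣ (Q : ℤ × ℤ × ℤ).2.2 then H Q else 0) := by
  rw [← Summable.tsum_finsetSum (fun r _ => summable_ite _ hH _), ← tsum_mul_left, ← tsum_mul_left,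
    ← Summable.tsum_add (summable_ite _ hH _) (summable_sum fun r _ => summable_ite _ hH _),
    ← Summable.tsum_add hH ((summable_ite _ hH _).mul_left _),
    ← Summable.tsum_add (hH.add ((summable_ite _ hH _).mul_left _))
      ((summable_ite _ hH _).mul_left _)]
  apply tsum_congr
  rintro ⟨⟨A, B, C⟩, hQ⟩
  have h := count_all p hp A B C D hD4 hQ
  simp only [ite_mul_cast _ (H (A, B, C))]
  rw [← Finset.sum_mul, ← add_mul]
  have h' := congrArg (fun n : ℤ => (n : ℂ) * H (A, B, C)) h
  simp only [Int.cast_add, Int.cast_mul, Int.cast_sum, Int.cast_one, Int.cast_natCast] at h'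
  rw [h']
  ring

lemma Dpow_mul (D : ℤ) (hD : 0 < D) (p : ℕ) (hp : 0 < p) (n : ℕ) :
    Dpow (D * (p : ℤ) ^ 2) (1 / 2 - ((n + 1 : ℕ) : ℝ)) =
      Dpow D (1 / 2 - ((n + 1 : ℕ) : ℝ)) * ((p : ℂ) ^ (2 * n + 1))⁻¹ := by
  have hp' : (0 : ℝ) < p := by exact_mod_cast hp
  have hD' : (0 : ℝ) < D := by exact_mod_cast hD
  unfold Dpow
  push_cast
  rw [Real.mul_rpow hD'.le (by positivity)]
  have : ((p : ℝ) ^ 2) ^ (1 / 2 - ((n : ℝ) + 1)) = ((p : ℝ) ^ (2 * n + 1))⁻¹ := by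
    rw [← Real.rpow_natCast, ← Real.rpow_mul hp'.le, ← Real.rpow_natCast, ← Real.rpow_neg hp'.le]
    congr 1
    push_cast; ring
  rw [this]
  push_cast
  rfl

end HeckeAux

theorem stmt14 (k : ℕ) (hk : 2 ≤ k) (D : ℤ) (hD : 0 < D)
    (hD4 : D % 4 = 0 ∨ D % 4 = 1) (hDsq : ¬∃ m : ℤ, m ^ 2 = D)
    (p : ℕ) (hp : p.Prime) (τ : ℂ) (hτ : 0 < τ.im) :
    heckeT k p (F k D) τ =
      F k (D * (p : ℤ) ^ 2) τ + (p : ℂ) ^ (-(k : ℤ)) * ((legSym D p : ℤ) : ℂ) * F k D τ +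
        (p : ℂ) ^ ((1 : ℤ) - 2 * (k : ℤ)) *
          (if ((p : ℤ) ^ 2 ∣ D) then F k (D / (p : ℤ) ^ 2) τ else 0) := by
  obtain ⟨n, rfl⟩ : ∃ n, k = n + 1 := ⟨k - 1, by omega⟩
  have hp0 := hp.pos
  have hpz : (0 : ℤ) < p := by exact_mod_cast hp0
  have hpc : (p : ℂ) ≠ 0 := by exact_mod_cast hp0.ne'
  have hE0 : 0 < D * (p : ℤ) ^ 2 := by positivity
  have hEsq : ¬∃ m : ℤ, m ^ 2 = D * (p : ℤ) ^ 2 := by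
    rintro ⟨m, hm⟩
    have hd : (p : ℤ) ∣ m := by
      rw [← Int.pow_dvd_pow_iff two_ne_zero, hm]
      exact dvd_mul_left _ _
    obtain ⟨m', rfl⟩ := hd
    refine hDsq ⟨m', mul_right_cancel₀ (pow_ne_zero 2 hpz.ne') ?_⟩
    linear_combination hm
  have hS := HeckeAux.summable_F (n + 1) hk (D * (p : ℤ) ^ 2) hE0 hEsq τ hτ
  have hmain := HeckeAux.main_identity D hD4 p hp (Fsummand (n + 1) (D * (p : ℤ) ^ 2) τ) hS
  have hI := (HeckeAux.tsum_inf D p hp0 (Fsummand (n + 1) (D * (p : ℤ) ^ 2) τ)).symm.trans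
    (tsum_congr (fun q : QD D => (HeckeAux.Fs_inf (n + 1) D τ p q).symm))
  have hR : ∀ r : ℕ, _ := fun r =>
    (HeckeAux.tsum_r D p r hp0 (Fsummand (n + 1) (D * (p : ℤ) ^ 2) τ)).symm.trans
    (tsum_congr (fun q : QD D => show Fsummand (n + 1) (D * (p : ℤ) ^ 2) τ (HeckeAux.phiR p r q) =
        ((p : ℂ) ^ 2) ^ n * Fsummand (n + 1) D ((τ + (r : ℂ)) / (p : ℂ)) q by
      rw [HeckeAux.Fs_r (n + 1) D τ p r hp0 q, Nat.add_sub_cancel, ← mul_assoc, ← mul_pow,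
        mul_inv_cancel₀ (pow_ne_zero 2 hpc), one_pow, one_mul]))
  have hZ1 := (HeckeAux.tsum_m D _ p hpz rfl (Fsummand (n + 1) (D * (p : ℤ) ^ 2) τ)).symm.trans
    (tsum_congr (fun q : QD D => show Fsummand (n + 1) (D * (p : ℤ) ^ 2) τ
        (HeckeAux.phiM (p : ℤ) q) = (p : ℂ) ^ n * Fsummand (n + 1) D τ q by
      rw [HeckeAux.Fs_m (n + 1) D τ p hpz q, Nat.add_sub_cancel, Int.cast_natCast]))
  simp only [tsum_mul_left] at hR hZ1
  have hZ2 : (p : ℂ) ^ ((1 : ℤ) - 2 * ((n + 1 : ℕ) : ℤ)) *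
          (if ((p : ℤ) ^ 2 ∣ D) then F (n + 1) (D / (p : ℤ) ^ 2) τ else 0) =
      Dpow D (1 / 2 - ((n + 1 : ℕ) : ℝ)) / (((Nat.choose (2 * (n + 1) - 2) (n + 1 - 1) : ℝ) * Real.pi : ℝ) : ℂ) *
        ((((p : ℂ) ^ 2)⁻¹) ^ n * ∑' Q : QD (D * (p : ℤ) ^ 2), if (p : ℤ) ^ 2 ∣ (Q : ℤ × ℤ × ℤ).1 ∧
      (p : ℤ) ^ 2 ∣ (Q : ℤ × ℤ × ℤ).2.1 ∧ (p : ℤ) ^ 2 ∣ (Q : ℤ × ℤ × ℤ).2.2 then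
        Fsummand (n + 1) (D * (p : ℤ) ^ 2) τ Q else 0) := by
    by_cases hpD : (p : ℤ) ^ 2 ∣ D
    · rw [if_pos hpD]
      obtain ⟨E, hE⟩ := hpD
      have hEpos : 0 < E := by
        by_contra hcon
        push Not at hcon
        have : (p : ℤ) ^ 2 * E ≤ 0 := mul_nonpos_of_nonneg_of_nonpos (by positivity) hcon
        omega
      have hdiv : D / (p : ℤ) ^ 2 = E := by
        rw [hE, Int.mul_ediv_cancel_left _ (pow_ne_zero 2 hpz.ne')]
      have hDE : D = E * (p : ℤ) ^ 2 := by rw [hE]; ring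
      rw [hdiv, ← HeckeAux.tsum_m E (D * (p : ℤ) ^ 2) ((p : ℤ) ^ 2) (by positivity)
        (by rw [hDE]; ring) (Fsummand (n + 1) (D * (p : ℤ) ^ 2) τ)]
      have : ∀ q : QD E, Fsummand (n + 1) (D * (p : ℤ) ^ 2) τ (HeckeAux.phiM ((p : ℤ) ^ 2) q) =
          ((p : ℂ) ^ 2) ^ n * Fsummand (n + 1) E τ q := by
        intro q
        have h := HeckeAux.Fs_m (n + 1) E τ ((p : ℤ) ^ 2) (by positivity) q
        rw [show E * ((p : ℤ) ^ 2) ^ 2 = D * (p : ℤ) ^ 2 by rw [hDE]; ring] at h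
        rw [h, Nat.add_sub_cancel]
        push_cast
        rfl
      rw [tsum_congr this, tsum_mul_left, ← mul_assoc (_ ^ n), ← mul_pow,
        inv_mul_cancel₀ (pow_ne_zero 2 hpc), one_pow, one_mul, hDE,
        HeckeAux.Dpow_mul E hEpos p hp0 n]
      unfold F
      rw [show (1 : ℤ) - 2 * ((n + 1 : ℕ) : ℤ) = -((2 * n + 1 : ℕ) : ℤ) by push_cast; ring,
        zpow_neg, zpow_natCast]
      ring
    · rw [if_neg hpD, mul_zero]
      have : ∀ Q : QD (D * (p : ℤ) ^ 2), (if (p : ℤ) ^ 2 ∣ (Q : ℤ × ℤ × ℤ).1 ∧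
          (p : ℤ) ^ 2 ∣ (Q : ℤ × ℤ × ℤ).2.1 ∧ (p : ℤ) ^ 2 ∣ (Q : ℤ × ℤ × ℤ).2.2 then
          Fsummand (n + 1) (D * (p : ℤ) ^ 2) τ Q else 0) = 0 := by
        rintro ⟨⟨A, B, C⟩, hQ⟩
        rw [if_neg]
        rintro ⟨⟨a, ha⟩, ⟨b, hb⟩, ⟨c, hc⟩⟩
        dsimp only at ha hb hc
        have h' : B ^ 2 - 4 * A * C = D * (p : ℤ) ^ 2 := hQ
        subst ha hb hc
        apply hpD
        refine ⟨b ^ 2 - 4 * a * c, mul_right_cancel₀ (pow_ne_zero 2 hpz.ne') ?_⟩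
        linear_combination -h'
      rw [tsum_congr this, tsum_zero, mul_zero, mul_zero]
  rw [hZ2]
  rw [hI, Finset.sum_congr rfl (fun r _ => hR r), hZ1, ← Finset.mul_sum] at hmain
  unfold heckeT F
  rw [HeckeAux.Dpow_mul D hD p hp0 n, ← Finset.mul_sum]
  rw [show (1 : ℤ) - 2 * ((n + 1 : ℕ) : ℤ) = -((2 * n + 1 : ℕ) : ℤ) by push_cast; ring,
        zpow_neg, zpow_natCast, zpow_neg, zpow_natCast]
  rw [mul_div_right_comm]
  generalize Dpow D (1 / 2 - ((n + 1 : ℕ) : ℝ)) / (((Nat.choose (2 * (n + 1) - 2) (n + 1 - 1) : ℝ) *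
    Real.pi : ℝ) : ℂ) = K at *
  have e1 : (p : ℂ) ^ (2 * n + 1) = (p : ℂ) ^ n * (p : ℂ) ^ n * p := by ring
  have e2 : ((p : ℂ) ^ 2) ^ n = (p : ℂ) ^ n * (p : ℂ) ^ n := by ring
  have e3 : (p : ℂ) ^ (n + 1) = (p : ℂ) ^ n * p := by ring
  have hu : (p : ℂ) ^ n ≠ 0 := pow_ne_zero n hpc
  rw [inv_pow, e1, e2, e3]
  rw [e2] at hmain
  generalize (p : ℂ) ^ n = u at *
  linear_combination (norm := (field_simp; ring)) K * (u * u * (p : ℂ))⁻¹ * hmain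
end

section
/- Let Q₀ ∈ 𝒬_D, let 𝒜 ⊆ 𝒬_D be its SL₂(ℤ)-orbit, and let Γ_{Q₀} := {γ ∈ SL₂(ℤ) : Q₀∘γ = Q₀}. Then for every set R ⊆ SL₂(ℤ) of representatives of the right cosets Γ_{Q₀}\SL₂(ℤ) and every τ ∈ ℍ: ∑_{γ∈R} j(A_{Q₀}γ, τ)^{2k−2} · φ̂((A_{Q₀}γ)τ) = C(2k−2,k−1)·π·D^{k/2}·F_{1−k,D,𝒜}(τ), the series converging absolutely. -/
lemma aux_pow (e : ℕ) : (e + 1) ^ 4 ≤ 100 * 2 ^ e := by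
  by_cases h : e < 8
  · interval_cases e <;> norm_num
  · push Not at h
    induction e, h using Nat.le_induction with
    | base => norm_num
    | succ n hn ih =>
      have : (n + 1 + 1) ^ 4 ≤ 2 * (n + 1) ^ 4 := by
        obtain ⟨m, rfl⟩ := Nat.exists_eq_add_of_le hn
        ring_nf
        nlinarith [Nat.zero_le m, Nat.zero_le (m^2), Nat.zero_le (m^3), Nat.zero_le (m^4)]
      calc _ ≤ 2 * (n + 1) ^ 4 := this
        _ ≤ 2 * (100 * 2 ^ n) := by gcongr
        _ = _ := by ring

lemma divisor_bound (n : ℕ) (hn : n ≠ 0) : (n.divisors.card) ^ 4 ≤ 100 ^ 16 * n := by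
  rw [Nat.card_divisors hn, ← Finset.prod_pow]
  have h1 : ∀ p ∈ n.primeFactors, (n.factorization p + 1) ^ 4 ≤
      (if p < 16 then 100 else 1) * p ^ n.factorization p := by
    intro p hp
    have hp' := Nat.prime_of_mem_primeFactors hp
    split_ifs with h
    · refine (aux_pow _).trans ?_
      gcongr
      exact hp'.two_le
    · push Not at h
      rw [one_mul]
      calc (n.factorization p + 1) ^ 4 ≤ (2 ^ n.factorization p) ^ 4 := by
            gcongr
            exact Nat.lt_two_pow_self
        _ = 16 ^ n.factorization p := by rw [← pow_mul, mul_comm, pow_mul]; norm_num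
        _ ≤ _ := by gcongr
  refine (Finset.prod_le_prod' h1).trans ?_
  rw [Finset.prod_mul_distrib]
  refine Nat.mul_le_mul ?_ ?_
  · rw [← Finset.prod_filter, Finset.prod_const]
    refine Nat.pow_le_pow_right (by norm_num) ?_
    calc _ ≤ (Finset.range 16).card := Finset.card_le_card (by intro p; simp)
      _ = 16 := by simp
  · have := Nat.prod_factorization_pow_eq_self hn
    exact le_of_eq this

lemma phi_bound (k : ℕ) (hk : 2 ≤ k) (v : ℝ) (h0 : 0 ≤ v) (h1 : v ≤ Real.pi / 2) :
    |phi k v| ≤ Real.pi / 2 * Real.sin v ^ (2 * k - 1) := by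
  have hs0 : 0 ≤ Real.sin v := Real.sin_nonneg_of_nonneg_of_le_pi h0 (by linarith [Real.pi_pos])
  have := intervalIntegral.norm_integral_le_of_norm_le_const (a := 0) (b := v)
    (f := fun u => Real.sin u ^ (2 * k - 2)) (C := Real.sin v ^ (2 * k - 2)) (by
      intro x hx
      rw [Set.uIoc_of_le h0] at hx
      have hx0 : 0 ≤ Real.sin x :=
        Real.sin_nonneg_of_nonneg_of_le_pi hx.1.le (by linarith [Real.pi_pos, hx.2])
      rw [Real.norm_eq_abs, abs_of_nonneg (by positivity)]
      gcongr
      exact Real.sin_le_sin_of_le_of_le_pi_div_two (by linarith [Real.pi_pos, hx.1]) h1 hx.2)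
  rw [Real.norm_eq_abs, sub_zero, abs_of_nonneg h0] at this
  refine this.trans ?_
  have hj := Real.mul_le_sin h0 h1
  have hv : v ≤ Real.pi / 2 * Real.sin v := by
    have hp := Real.pi_pos
    calc v = Real.pi / 2 * (2 / Real.pi * v) := by field_simp
      _ ≤ _ := by gcongr
  have e : 2 * k - 1 = (2 * k - 2) + 1 := by omega
  rw [e, pow_succ]
  calc _ ≤ Real.sin v ^ (2 * k - 2) * (Real.pi / 2 * Real.sin v) := by gcongr
    _ = _ := by ring

lemma psi_sin (k : ℕ) (hk : 2 ≤ k) (v : ℝ) (h0 : 0 ≤ v) (h1 : v < Real.pi / 2) :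
    psi k (Real.sin v ^ 2) = phi k v := by
  have hk' : (2:ℝ) ≤ k := by exact_mod_cast hk
  have key := intervalIntegral.integral_comp_mul_deriv'' (a := 0) (b := v)
    (f := fun u => Real.sin u ^ 2) (f' := fun u => 2 * Real.sin u * Real.cos u)
    (g := fun u : ℝ => u ^ ((k : ℝ) - 3 / 2) * (1 - u) ^ (-(1:ℝ) / 2))
    (by fun_prop)
    (by
      intro x _
      have := ((Real.hasDerivAt_sin x).pow 2).hasDerivWithinAt (s := Set.Ioi x)
      have e : Real.sin ^ 2 = fun u => Real.sin u ^ 2 := rfl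
      rw [e] at this
      simpa using this)
    (by fun_prop)
    (by
      rintro _ ⟨x, hx, rfl⟩
      rw [Set.uIcc_of_le h0] at hx
      have hc : 0 < Real.cos x := Real.cos_pos_of_mem_Ioo ⟨by linarith [hx.1, Real.pi_pos], by linarith [hx.2]⟩
      apply ContinuousAt.continuousWithinAt
      apply ContinuousAt.mul
      · exact continuousAt_id.rpow_const (Or.inr (by linarith))
      · refine ContinuousAt.rpow_const (by fun_prop) (Or.inl ?_)
        have := Real.sin_sq_add_cos_sq x
        have : (0:ℝ) < Real.cos x ^ 2 := by positivity
        simp only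
        linarith)
  unfold psi phi
  have hz : Real.sin 0 ^ 2 = 0 := by simp
  simp only [hz] at key
  rw [← key, ← intervalIntegral.integral_const_mul]
  apply intervalIntegral.integral_congr
  intro x hx
  rw [Set.uIcc_of_le h0] at hx
  have hc : 0 < Real.cos x := Real.cos_pos_of_mem_Ioo ⟨by linarith [hx.1, Real.pi_pos], by linarith [hx.2]⟩
  have hs : 0 ≤ Real.sin x :=
    Real.sin_nonneg_of_nonneg_of_le_pi hx.1 (by linarith [Real.pi_pos, hx.2])
  have e1 : (Real.sin x ^ 2) ^ ((k:ℝ) - 3 / 2) = Real.sin x ^ (2 * k - 3) := by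
    rw [← Real.rpow_natCast (Real.sin x) 2, ← Real.rpow_mul hs, ← Real.rpow_natCast]
    congr 1
    rw [Nat.cast_sub (by omega)]
    push_cast; ring
  have e2 : (1 - Real.sin x ^ 2) ^ (-(1:ℝ) / 2) = (Real.cos x)⁻¹ := by
    rw [← Real.cos_sq', ← Real.rpow_natCast (Real.cos x) 2, ← Real.rpow_mul hc.le]
    norm_num
    rw [Real.rpow_neg_one]
  simp only [Function.comp]
  rw [e1, e2]
  have e : 2 * k - 2 = (2 * k - 3) + 1 := by omega
  rw [e, pow_succ]
  field_simp

lemma psi_arctan (k : ℕ) (hk : 2 ≤ k) (t : ℝ) (h0 : 0 ≤ t) :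
    psi k (t ^ 2 / (1 + t ^ 2)) = phi k (Real.arctan t) := by
  rw [← Real.sin_sq_arctan]
  exact psi_sin k hk _ (Real.arctan_nonneg.2 h0) (Real.arctan_lt_pi_div_two t)

lemma QAct_mul (q : ℤ × ℤ × ℤ) (γ δ : Matrix.SpecialLinearGroup (Fin 2) ℤ) :
    QAct q (γ * δ) = QAct (QAct q γ) δ := by
  unfold QAct
  simp only [Matrix.SpecialLinearGroup.coe_mul, Matrix.mul_apply, Fin.sum_univ_two]
  ext <;> simp only <;> ring

lemma QAct_one (q : ℤ × ℤ × ℤ) : QAct q 1 = q := by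
  unfold QAct
  simp

lemma QAct_mem (D : ℤ) (q : ℤ × ℤ × ℤ) (hq : q ∈ QD D)
    (γ : Matrix.SpecialLinearGroup (Fin 2) ℤ) : QAct q γ ∈ QD D := by
  have hd := γ.det_coe
  rw [Matrix.det_fin_two] at hd
  unfold QD at *
  simp only [Set.mem_ofPred_eq] at *
  unfold QAct
  simp only
  calc _ = (q.2.1 ^ 2 - 4 * q.1 * q.2.2) * (γ.1 0 0 * γ.1 1 1 - γ.1 0 1 * γ.1 1 0) ^ 2 := by ring
    _ = D := by rw [hd, hq]; ring

lemma QD_ne (D : ℤ) (hDsq : ¬∃ m : ℤ, m ^ 2 = D) (q : ℤ × ℤ × ℤ) (hq : q ∈ QD D) :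
    q.1 ≠ 0 := by
  intro h
  unfold QD at hq
  simp only [Set.mem_ofPred_eq, h] at hq
  exact hDsq ⟨q.2.1, by linarith⟩

/-- `|Q(τ,1)|² = Qell² + D y²`. -/
lemma normSq_Qval (D : ℤ) (q : ℤ × ℤ × ℤ) (hq : q ∈ QD D) (τ : ℂ) :
    Complex.normSq (Qval q τ) = Qell q τ ^ 2 + (D:ℝ) * τ.im ^ 2 := by
  have hq' : ((q.2.1:ℝ)) ^ 2 - 4 * q.1 * q.2.2 = D := by
    unfold QD at hq
    exact_mod_cast hq
  rw [← hq']
  unfold Qval Qell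
  simp only [Complex.normSq_apply, Complex.add_re, Complex.add_im, Complex.mul_re, Complex.mul_im,
    Complex.intCast_re, Complex.intCast_im, pow_two]
  ring

lemma b_bound (D : ℤ) (hD : 0 < D) (τ : ℂ) (hτ : 0 < τ.im) :
    ∃ C : ℝ, 0 < C ∧ ∀ q ∈ QD D, 1 + (q.2.1:ℝ) ^ 2 ≤ C * Complex.normSq (Qval q τ) := by
  have hD' : (0:ℝ) < D := by exact_mod_cast hD
  refine ⟨(1 / τ.im + 2 * |τ.re| / τ.im ^ 2) ^ 2 + 1 / (D * τ.im ^ 2), by positivity, ?_⟩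
  intro q hq
  have hN := normSq_Qval D q hq τ
  set N := Complex.normSq (Qval q τ) with hNdef
  have hN0 : 0 ≤ N := Complex.normSq_nonneg _
  set s := Real.sqrt N with hs
  have hs0 : 0 ≤ s := Real.sqrt_nonneg _
  have hss : s ^ 2 = N := Real.sq_sqrt hN0
  have hre : (Qval q τ).re = q.1 * (τ.re ^ 2 - τ.im ^ 2) + q.2.1 * τ.re + q.2.2 := by
    unfold Qval
    simp [pow_two]
  have him : (Qval q τ).im = τ.im * (2 * q.1 * τ.re + q.2.1) := by
    unfold Qval
    simp [pow_two]
    ring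
  have hel : Qell q τ = (Qval q τ).re + 2 * q.1 * τ.im ^ 2 := by
    rw [hre]; unfold Qell; rw [Complex.normSq_apply]; ring
  have h1 : |Qell q τ| ≤ s := by
    apply abs_le_of_sq_le_sq _ hs0
    rw [hss, hN]; nlinarith [mul_pos hD' (pow_pos hτ 2)]
  have hN2 : N = (Qval q τ).re ^ 2 + (Qval q τ).im ^ 2 := by
    rw [hNdef, Complex.normSq_apply]; ring
  have h2 : |(Qval q τ).re| ≤ s := by
    apply abs_le_of_sq_le_sq _ hs0
    rw [hss, hN2]; nlinarith [sq_nonneg (Qval q τ).im]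
  have h3 : |(Qval q τ).im| ≤ s := by
    apply abs_le_of_sq_le_sq _ hs0
    rw [hss, hN2]; nlinarith [sq_nonneg (Qval q τ).re]
  have ha : |(q.1:ℝ)| ≤ s / τ.im ^ 2 := by
    rw [le_div_iff₀ (by positivity)]
    have e : (q.1:ℝ) * τ.im ^ 2 = (Qell q τ - (Qval q τ).re) / 2 := by rw [hel]; ring
    have : |(q.1:ℝ)| * τ.im ^ 2 = |(q.1:ℝ) * τ.im ^ 2| := by
      rw [abs_mul, abs_of_nonneg (by positivity : 0 ≤ τ.im ^ 2)]
    rw [this, e]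
    rw [abs_le] at *
    constructor <;> linarith [h1.1, h1.2, h2.1, h2.2]
  have hb : |(2 * q.1 * τ.re + q.2.1:ℝ)| ≤ s / τ.im := by
    rw [le_div_iff₀ hτ]
    rw [him, abs_mul, abs_of_pos hτ] at h3
    linarith
  have hb2 : |(q.2.1:ℝ)| ≤ s * (1 / τ.im + 2 * |τ.re| / τ.im ^ 2) := by
    have e : (q.2.1:ℝ) = (2 * q.1 * τ.re + q.2.1) - 2 * q.1 * τ.re := by ring
    calc |(q.2.1:ℝ)| ≤ |(2 * q.1 * τ.re + q.2.1:ℝ)| + |2 * q.1 * τ.re| := by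
          conv_lhs => rw [e]
          exact abs_sub _ _
      _ = |(2 * q.1 * τ.re + q.2.1:ℝ)| + 2 * |(q.1:ℝ)| * |τ.re| := by
          rw [abs_mul, abs_mul]; norm_num
      _ ≤ s / τ.im + 2 * (s / τ.im ^ 2) * |τ.re| := by gcongr
      _ = _ := by ring
  have hb3 : (q.2.1:ℝ) ^ 2 ≤ N * (1 / τ.im + 2 * |τ.re| / τ.im ^ 2) ^ 2 := by
    rw [← hss, ← mul_pow, ← sq_abs]
    gcongr
  have h4 : 1 ≤ 1 / (D * τ.im ^ 2) * N := by
    rw [one_div, inv_mul_eq_div, le_div_iff₀ (by positivity), hN]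
    nlinarith [sq_nonneg (Qell q τ)]
  linarith

lemma Fsummand_bound (k : ℕ) (hk : 2 ≤ k) (D : ℤ) (hD : 0 < D) (τ : ℂ) (hτ : 0 < τ.im) :
    ∃ C : ℝ, 0 < C ∧ ∀ q ∈ QD D, ‖Fsummand k D τ q‖ ≤ C * (1 + (q.2.1:ℝ) ^ 2)⁻¹ := by
  have hD' : (0:ℝ) < D := by exact_mod_cast hD
  obtain ⟨C, hC, hCb⟩ := b_bound D hD τ hτ
  set E := Real.sqrt (D * τ.im ^ 2) with hE
  have hE0 : 0 < E := Real.sqrt_pos.2 (by positivity)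
  have hE2 : E ^ 2 = D * τ.im ^ 2 := Real.sq_sqrt (by positivity)
  refine ⟨Real.pi / 2 * E ^ (2 * k - 1) * (E ^ (k - 2))⁻¹ * C, by positivity, ?_⟩
  intro q hq
  have hN := normSq_Qval D q hq τ
  have hb := hCb q hq
  have hNn : Complex.normSq (Qval q τ) = ‖Qval q τ‖ ^ 2 := Complex.normSq_eq_norm_sq _
  set s := ‖Qval q τ‖ with hs
  have hs0 : 0 ≤ s := norm_nonneg _
  have hEs : E ≤ s := by
    apply le_of_sq_le_sq _ hs0
    rw [← hNn, hN, hE2]; nlinarith [sq_nonneg (Qell q τ)]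
  have hspos : 0 < s := hE0.trans_le hEs
  by_cases hz : Qell q τ = 0
  · unfold Fsummand
    rw [hz]
    simp
    positivity
  have hz' : 0 < |Qell q τ| := abs_pos.2 hz
  set t := E / |Qell q τ| with ht
  have ht0 : 0 ≤ t := by positivity
  have hsum : s ^ 2 = |Qell q τ| ^ 2 + E ^ 2 := by rw [← hNn, hN, sq_abs, hE2]
  have e1 : (D:ℝ) * τ.im ^ 2 / Complex.normSq (Qval q τ) = t ^ 2 / (1 + t ^ 2) := by
    rw [hNn, ← hE2, ht, hsum]; field_simp
  have e2 : Real.sin (Real.arctan t) = E / s := by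
    have : Real.sqrt (1 + t ^ 2) = s / |Qell q τ| := by
      rw [Real.sqrt_eq_iff_mul_self_eq (by positivity) (by positivity), ht]
      field_simp
      linarith
    rw [Real.sin_arctan, this, ht]; field_simp
  have hphi := phi_bound k hk (Real.arctan t) (Real.arctan_nonneg.2 ht0)
    (Real.arctan_lt_pi_div_two t).le
  rw [e2] at hphi
  unfold Fsummand
  rw [e1, psi_arctan k hk t ht0, norm_mul, norm_mul, norm_pow, Complex.norm_real,
    Complex.norm_real, Real.norm_eq_abs, Real.norm_eq_abs, ← hs]
  have hsign : |Real.sign (Qell q τ)| ≤ 1 := by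
    rcases Real.sign_apply_eq (Qell q τ) with h | h | h <;> rw [h] <;> norm_num
  calc |Real.sign (Qell q τ)| * s ^ (k - 1) * |phi k (Real.arctan t)|
      ≤ 1 * s ^ (k - 1) * (Real.pi / 2 * (E / s) ^ (2 * k - 1)) := by gcongr
    _ = Real.pi / 2 * E ^ (2 * k - 1) * ((s ^ (k - 2))⁻¹ * (s ^ 2)⁻¹) := by
        obtain ⟨m, rfl⟩ := Nat.exists_eq_add_of_le hk
        have i1 : 2 + m - 1 = m + 1 := by omega
        have i2 : 2 * (2 + m) - 1 = 2 * m + 3 := by omega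
        have i3 : 2 + m - 2 = m := by omega
        rw [i1, i2, i3, div_pow]
        field_simp
        ring
    _ ≤ Real.pi / 2 * E ^ (2 * k - 1) * ((E ^ (k - 2))⁻¹ * (C * (1 + (q.2.1:ℝ) ^ 2)⁻¹)) := by
        gcongr
        rw [← div_eq_mul_inv, le_div_iff₀ (by positivity), inv_mul_le_iff₀ (by positivity)]
        rw [← hNn]; linarith
    _ = _ := by ring

lemma summable_pairs (D : ℤ) (hDsq : ¬∃ m : ℤ, m ^ 2 = D) :
    Summable (fun p : ℤ × ℤ => if p.2 ∣ p.1 ^ 2 - D then (1 + (p.1:ℝ) ^ 2)⁻¹ else 0) := by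
  have hne : ∀ b : ℤ, b ^ 2 - D ≠ 0 := fun b h => hDsq ⟨b, by linarith⟩
  -- the finite set of divisors
  have hfin : ∀ b : ℤ, ∃ S : Finset ℤ, (∀ a : ℤ, a ∣ b ^ 2 - D → a ∈ S) ∧
      S.card ≤ 2 * (b ^ 2 - D).natAbs.divisors.card := by
    intro b
    refine ⟨(b ^ 2 - D).natAbs.divisors.image (fun n : ℕ => (n:ℤ)) ∪
      (b ^ 2 - D).natAbs.divisors.image (fun n : ℕ => -(n:ℤ)), ?_, ?_⟩
    · intro a ha
      have : a.natAbs ∈ (b ^ 2 - D).natAbs.divisors := by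
        rw [Nat.mem_divisors]
        exact ⟨Int.natAbs_dvd_natAbs.2 ha, Int.natAbs_ne_zero.2 (hne b)⟩
      rw [Finset.mem_union, Finset.mem_image, Finset.mem_image]
      rcases Int.natAbs_eq a with h | h
      · exact Or.inl ⟨_, this, h.symm⟩
      · exact Or.inr ⟨_, this, h.symm⟩
    · refine (Finset.card_union_le _ _).trans ?_
      rw [two_mul]
      exact add_le_add Finset.card_image_le Finset.card_image_le
  choose S hS hScard using hfin
  rw [summable_prod_of_nonneg (by
    intro p
    simp only [Pi.zero_apply]
    split_ifs <;> positivity)]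
  have hzero : ∀ b : ℤ, ∀ a ∉ S b, (if a ∣ b ^ 2 - D then (1 + (b:ℝ) ^ 2)⁻¹ else 0) = 0 := by
    intro b a ha
    rw [if_neg (fun h => ha (hS b a h))]
  refine ⟨fun b => summable_of_ne_finset_zero (hzero b), ?_⟩
  -- bound the inner sums
  have hsumm : Summable (fun b : ℤ => 2 * (10 ^ 8 * (1 + |(D:ℝ)|)) * |(b:ℝ)| ^ (-(3/2 : ℝ))) :=
    (Real.summable_abs_int_rpow (by norm_num)).mul_left _
  refine hsumm.of_norm_bounded_eventually ?_
  have hcof : ∀ᶠ b : ℤ in Filter.cofinite, b ≠ 0 :=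
    (Set.finite_singleton (0:ℤ)).compl_mem_cofinite
  filter_upwards [hcof] with b hb
  rw [tsum_eq_sum (hzero b)]
  have hb1 : (1:ℝ) ≤ |(b:ℝ)| := by exact_mod_cast Int.one_le_abs hb
  set n := (b ^ 2 - D).natAbs with hn
  have hn0 : n ≠ 0 := Int.natAbs_ne_zero.2 (hne b)
  have hdb : ((n.divisors.card:ℝ)) ^ 4 ≤ 100 ^ 16 * n := by exact_mod_cast divisor_bound n hn0
  have hnb : (n:ℝ) ≤ (1 + |(D:ℝ)|) * |(b:ℝ)| ^ 2 := by
    have : (n:ℝ) = |(b:ℝ) ^ 2 - D| := by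
      rw [hn, Nat.cast_natAbs]; push_cast; rfl
    rw [this]
    have hb2 : 1 ≤ |(b:ℝ)| ^ 2 := one_le_pow₀ hb1
    calc |(b:ℝ) ^ 2 - D| ≤ |(b:ℝ) ^ 2| + |(D:ℝ)| := abs_sub _ _
      _ = |(b:ℝ)| ^ 2 + |(D:ℝ)| := by rw [abs_pow]
      _ ≤ _ := by nlinarith [abs_nonneg (D:ℝ)]
  have hd : (n.divisors.card:ℝ) ≤ 10 ^ 8 * (1 + |(D:ℝ)|) * |(b:ℝ)| ^ ((1/2:ℝ)) := by
    refine le_of_pow_le_pow_left₀ (n := 4) (by norm_num) (by positivity) (hdb.trans ?_)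
    rw [mul_pow, mul_pow]
    have : (|(b:ℝ)| ^ ((1/2:ℝ))) ^ 4 = |(b:ℝ)| ^ 2 := by
      rw [← Real.rpow_natCast, ← Real.rpow_mul (abs_nonneg _), ← Real.rpow_natCast]
      norm_num
    rw [this]
    calc (100:ℝ) ^ 16 * n ≤ 100 ^ 16 * ((1 + |(D:ℝ)|) * |(b:ℝ)| ^ 2) := by gcongr
      _ ≤ 100 ^ 16 * ((1 + |(D:ℝ)|) ^ 4 * |(b:ℝ)| ^ 2) := by
          gcongr
          exact le_self_pow₀ (by linarith [abs_nonneg (D:ℝ)]) (by norm_num)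
      _ = _ := by ring
  have hterm : ∀ a ∈ S b, (if a ∣ b ^ 2 - D then (1 + (b:ℝ) ^ 2)⁻¹ else 0) ≤ (|(b:ℝ)| ^ 2)⁻¹ := by
    intro a _
    split_ifs
    · gcongr
      rw [sq_abs]; linarith
    · positivity
  rw [Real.norm_eq_abs, abs_of_nonneg (Finset.sum_nonneg (by intros; split_ifs <;> positivity))]
  refine (Finset.sum_le_card_nsmul _ _ _ hterm).trans ?_
  rw [nsmul_eq_mul]
  have hc : ((S b).card:ℝ) ≤ 2 * n.divisors.card := by exact_mod_cast hScard b
  have hexp : |(b:ℝ)| ^ (-(3/2 : ℝ)) = |(b:ℝ)| ^ ((1/2:ℝ)) * (|(b:ℝ)| ^ 2)⁻¹ := by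
    have hpos : 0 < |(b:ℝ)| := by linarith
    rw [← Real.rpow_natCast, ← Real.rpow_neg hpos.le, ← Real.rpow_add hpos]
    norm_num
  rw [hexp]
  calc ((S b).card:ℝ) * (|(b:ℝ)| ^ 2)⁻¹
      ≤ (2 * (10 ^ 8 * (1 + |(D:ℝ)|) * |(b:ℝ)| ^ ((1/2:ℝ)))) * (|(b:ℝ)| ^ 2)⁻¹ := by
        gcongr
        linarith
    _ = _ := by ring

lemma summable_Fsummand (k : ℕ) (hk : 2 ≤ k) (D : ℤ) (hD : 0 < D)
    (hDsq : ¬∃ m : ℤ, m ^ 2 = D) (τ : ℂ) (hτ : 0 < τ.im) :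
    Summable (fun q : QD D => Fsummand k D τ (q : ℤ × ℤ × ℤ)) := by
  obtain ⟨C, hC, hb⟩ := Fsummand_bound k hk D hD τ hτ
  have hinj : Function.Injective (fun q : QD D => ((q.1.2.1, q.1.1) : ℤ × ℤ)) := by
    rintro ⟨⟨a, b, c⟩, hq⟩ ⟨⟨a', b', c'⟩, hq'⟩ h
    have ha := QD_ne D hDsq _ hq
    simp only [Prod.mk.injEq] at h
    obtain ⟨rfl, rfl⟩ := h
    have h1 : b ^ 2 - 4 * a * c = D := hq
    have h2 : b ^ 2 - 4 * a * c' = D := hq'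
    have : a * c = a * c' := by linarith
    have := mul_left_cancel₀ ha this
    subst this
    rfl
  have := ((summable_pairs D hDsq).comp_injective hinj).mul_left C
  refine this.of_norm_bounded ?_
  rintro ⟨⟨a, b, c⟩, hq⟩
  refine (hb _ hq).trans (le_of_eq ?_)
  have h1 : b ^ 2 - 4 * a * c = D := hq
  have h2 : a ∣ b ^ 2 - D := ⟨4 * c, by linarith⟩
  simp only [Function.comp, if_pos h2]

/-- `j(A_Q γ, τ)` and the numerator, with their basic identities. -/
lemma main_identities (D : ℤ) (hD : 0 < D) (hDsq : ¬∃ m : ℤ, m ^ 2 = D)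
    (q : ℤ × ℤ × ℤ) (hq : q ∈ QD D) (γ : Matrix.SpecialLinearGroup (Fin 2) ℤ) (τ : ℂ)
    (num den : ℂ)
    (hnum : num = ((AQ D q * toR γ) 0 0 : ℝ) * τ + ((AQ D q * toR γ) 0 1 : ℝ))
    (hden : den = ((AQ D q * toR γ) 1 0 : ℝ) * τ + ((AQ D q * toR γ) 1 1 : ℝ)) :
    num * den = -Qval (QAct q γ) τ / (Real.sqrt D : ℝ) ∧
    (num * (starRingEnd ℂ) den).re = -Qell (QAct q γ) τ / Real.sqrt D ∧
    (num * (starRingEnd ℂ) den).im = τ.im := by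
  have hD' : (0:ℝ) < D := by exact_mod_cast hD
  have hs : 0 < Real.sqrt D := Real.sqrt_pos.2 hD'
  have hss : Real.sqrt D ^ 2 = D := Real.sq_sqrt hD'.le
  have ha : (q.1:ℝ) ≠ 0 := by exact_mod_cast QD_ne D hDsq q hq
  have hdisc : ((q.2.1:ℝ)) ^ 2 - 4 * q.1 * q.2.2 = D := by
    unfold QD at hq
    exact_mod_cast hq
  have hdet : (γ.1 0 0 : ℝ) * γ.1 1 1 - γ.1 0 1 * γ.1 1 0 = 1 := by
    have hd := γ.det_coe
    rw [Matrix.det_fin_two] at hd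
    exact_mod_cast hd
  have hsumr : (q.1:ℝ) * (etaQ D q + etaQ' D q) = -q.2.1 := by
    unfold etaQ etaQ'; field_simp; ring
  have hprod : (q.1:ℝ) * (etaQ D q * etaQ' D q) = q.2.2 := by
    unfold etaQ etaQ'; field_simp
    nlinarith
  have hdiff : etaQ D q - etaQ' D q = Real.sqrt D / q.1 := by
    unfold etaQ etaQ'; field_simp; ring
  have hne : etaQ D q - etaQ' D q ≠ 0 := by rw [hdiff]; positivity
  obtain ⟨κ, hκ⟩ : ∃ κ, κ = 1 / Real.sqrt |etaQ D q - etaQ' D q| := ⟨_, rfl⟩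
  obtain ⟨σ, hσ⟩ : ∃ σ, σ = Real.sign (etaQ D q - etaQ' D q) := ⟨_, rfl⟩
  have hκσ : κ ^ 2 * σ * (etaQ D q - etaQ' D q) = 1 := by
    have h1 : σ * (etaQ D q - etaQ' D q) = |etaQ D q - etaQ' D q| := by
      rw [hσ]
      rcases lt_or_gt_of_ne hne with h | h
      · rw [Real.sign_of_neg h, abs_of_neg h]; ring
      · rw [Real.sign_of_pos h, abs_of_pos h]; ring
    rw [mul_assoc, h1, hκ, div_pow, Real.sq_sqrt (abs_nonneg _)]
    have := abs_pos.2 hne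
    field_simp
  have hκσ2 : κ ^ 2 * σ = q.1 / Real.sqrt D := by
    rw [hdiff] at hκσ
    field_simp at hκσ ⊢
    linarith
  obtain ⟨η, hη⟩ : ∃ η, η = etaQ D q := ⟨_, rfl⟩
  obtain ⟨η', hη'⟩ : ∃ η', η' = etaQ' D q := ⟨_, rfl⟩
  have hA : AQ D q = !![κ, -(κ * η'); -(κ * σ), κ * σ * η] := by
    unfold AQ
    rw [← hκ, ← hσ, ← hη, ← hη']
    ext i j
    fin_cases i <;> fin_cases j <;> simp
    ring
  rw [← hη, ← hη'] at hsumr hprod hκσ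
  have hb' : (q.2.1:ℝ) = -(q.1 * (η + η')) := by linarith
  have hnum' : num = ((κ * (γ.1 0 0 - η' * γ.1 1 0) : ℝ):ℂ) * τ +
      ((κ * (γ.1 0 1 - η' * γ.1 1 1) : ℝ) : ℂ) := by
    rw [hnum, hA]
    simp only [toR, Matrix.mul_apply, Fin.sum_univ_two, Matrix.map_apply]
    simp
    ring
  have hden' : den = ((-(κ * σ * (γ.1 0 0 - η * γ.1 1 0)) : ℝ):ℂ) * τ +
      ((-(κ * σ * (γ.1 0 1 - η * γ.1 1 1)) : ℝ) : ℂ) := by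
    rw [hden, hA]
    simp only [toR, Matrix.mul_apply, Fin.sum_univ_two, Matrix.map_apply]
    simp
    ring
  have hbC : (q.2.1:ℂ) = -(q.1 * ((η:ℂ) + η')) := by exact_mod_cast congrArg Complex.ofReal hb'
  have hcC : (q.2.2:ℂ) = q.1 * ((η:ℂ) * η') := by exact_mod_cast congrArg Complex.ofReal hprod.symm
  have hsC : ((Real.sqrt D : ℝ) : ℂ) ≠ 0 := by exact_mod_cast hs.ne'
  refine ⟨?_, ?_, ?_⟩
  · have e : num * den = -((κ ^ 2 * σ : ℝ) : ℂ) *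
        ((γ.1 0 0 * τ + γ.1 0 1) ^ 2 - (η + η') * (γ.1 0 0 * τ + γ.1 0 1) * (γ.1 1 0 * τ + γ.1 1 1)
          + η * η' * (γ.1 1 0 * τ + γ.1 1 1) ^ 2) := by
      rw [hnum', hden']; push_cast; ring
    rw [e, hκσ2]
    unfold Qval QAct
    push_cast
    rw [hbC, hcC]
    field_simp
    ring
  · have e : (num * (starRingEnd ℂ) den).re = -(κ ^ 2 * σ) *
        ((γ.1 0 0 ^ 2 - (η + η') * γ.1 0 0 * γ.1 1 0 + η * η' * γ.1 1 0 ^ 2) * Complex.normSq τ +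
          (2 * γ.1 0 0 * γ.1 0 1 - (η + η') * (γ.1 0 0 * γ.1 1 1 + γ.1 0 1 * γ.1 1 0)
            + 2 * (η * η') * γ.1 1 0 * γ.1 1 1) * τ.re +
          (γ.1 0 1 ^ 2 - (η + η') * γ.1 0 1 * γ.1 1 1 + η * η' * γ.1 1 1 ^ 2)) := by
      rw [hnum', hden', Complex.normSq_apply]
      simp only [Complex.mul_re, Complex.conj_re, Complex.conj_im, Complex.add_re, Complex.add_im,
        Complex.mul_im, Complex.ofReal_re, Complex.ofReal_im]
      ring
    rw [e, hκσ2]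
    unfold Qell QAct
    push_cast
    rw [hb', ← hprod]
    field_simp
    ring
  · have e : (num * (starRingEnd ℂ) den).im = (κ ^ 2 * σ * (η - η')) *
        ((γ.1 0 0 : ℝ) * γ.1 1 1 - γ.1 0 1 * γ.1 1 0) * τ.im := by
      rw [hnum', hden']
      simp only [Complex.mul_re, Complex.conj_re, Complex.conj_im, Complex.add_re, Complex.add_im,
        Complex.mul_im, Complex.ofReal_re, Complex.ofReal_im]
      ring
    rw [e, hκσ, hdet]; ring

lemma main_term (k : ℕ) (hk : 2 ≤ k) (D : ℤ) (hD : 0 < D) (hDsq : ¬∃ m : ℤ, m ^ 2 = D)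
    (q : ℤ × ℤ × ℤ) (hq : q ∈ QD D) (γ : Matrix.SpecialLinearGroup (Fin 2) ℤ) (τ : ℂ)
    (hτ : 0 < τ.im) :
    jfac (AQ D q * toR γ) τ ^ (2 * k - 2) * phiHat k (moeb (AQ D q * toR γ) τ) =
      ((-1) ^ k * ((Real.sqrt D : ℝ) : ℂ)⁻¹ ^ (k - 1)) * Fsummand k D τ (QAct q γ) := by
  have hD' : (0:ℝ) < D := by exact_mod_cast hD
  have hs : 0 < Real.sqrt D := Real.sqrt_pos.2 hD'
  have hss : Real.sqrt D ^ 2 = D := Real.sq_sqrt hD'.le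
  unfold jfac moeb
  obtain ⟨num, hnum⟩ : ∃ num : ℂ,
    num = ((AQ D q * toR γ) 0 0 : ℝ) * τ + ((AQ D q * toR γ) 0 1 : ℝ) := ⟨_, rfl⟩
  obtain ⟨den, hden⟩ : ∃ den : ℂ,
    den = ((AQ D q * toR γ) 1 0 : ℝ) * τ + ((AQ D q * toR γ) 1 1 : ℝ) := ⟨_, rfl⟩
  obtain ⟨h1, h2, h3⟩ := main_identities D hD hDsq q hq γ τ num den hnum hden
  rw [← hnum, ← hden]
  have hNs := normSq_Qval D (QAct q γ) (QAct_mem D q hq γ) τ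
  generalize hQ : QAct q γ = Q at *
  have hd0 : den ≠ 0 := by
    intro h
    rw [h] at h3
    simp at h3
    linarith
  have hN : 0 < Complex.normSq den := Complex.normSq_pos.2 hd0
  have hw : num / den = (num * (starRingEnd ℂ) den) * (((Complex.normSq den)⁻¹ : ℝ) : ℂ) := by
    rw [div_eq_mul_inv, Complex.inv_def]; push_cast; ring
  have hre : (num / den).re = -(Qell Q τ) * ((Real.sqrt D)⁻¹ * (Complex.normSq den)⁻¹) := by
    rw [hw, Complex.re_mul_ofReal, h2]; ring
  have him : (num / den).im = τ.im * (Complex.normSq den)⁻¹ := by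
    rw [hw, Complex.im_mul_ofReal, h3]
  have hsign : Real.sign (num / den).re = -Real.sign (Qell Q τ) := by
    have hp : 0 < (Real.sqrt D)⁻¹ * (Complex.normSq den)⁻¹ := by positivity
    rw [hre]
    rcases lt_trichotomy (Qell Q τ) 0 with h | h | h
    · rw [Real.sign_of_neg h, Real.sign_of_pos (by nlinarith)]; norm_num
    · rw [h]; simp
    · rw [Real.sign_of_pos h, Real.sign_of_neg (by nlinarith)]
  unfold phiHat Fsummand
  rw [hsign]
  by_cases hz : Qell Q τ = 0
  · rw [hz]; simp
  have hz' : 0 < |Qell Q τ| := abs_pos.2 hz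
  have ht : |(num / den).im / (num / den).re| = τ.im * Real.sqrt D / |Qell Q τ| := by
    rw [hre, him, abs_div, abs_mul, abs_mul, abs_neg, abs_of_pos hτ, abs_of_pos (inv_pos.2 hN),
      abs_of_pos (by positivity : 0 < (Real.sqrt D)⁻¹ * (Complex.normSq den)⁻¹)]
    field_simp
  have hpsi : psi k ((D : ℝ) * τ.im ^ 2 / Complex.normSq (Qval Q τ)) =
      phi k (Real.arctan |(num / den).im / (num / den).re|) := by
    rw [← psi_arctan k hk _ (abs_nonneg _), ht]
    congr 1
    rw [hNs, ← sq_abs (Qell Q τ), div_pow, mul_pow, hss]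
    field_simp
  rw [hpsi]
  have hpow : den ^ (2 * k - 2) * (num / den) ^ (k - 1) =
      (-1) ^ (k - 1) * ((Real.sqrt D : ℝ) : ℂ)⁻¹ ^ (k - 1) * Qval Q τ ^ (k - 1) := by
    have e : 2 * k - 2 = 2 * (k - 1) := by omega
    rw [e, pow_mul, ← mul_pow, ← mul_pow, ← mul_pow]
    congr 1
    have : den ^ 2 * (num / den) = num * den := by field_simp
    rw [this, h1]
    field_simp
  have hk1 : (-1:ℂ) ^ k = (-1) ^ (k - 1) * (-1) := by
    rw [← pow_succ]; congr 1; omega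
  rw [hk1]
  push_cast
  linear_combination (-(Real.sign (Qell Q τ) : ℂ) *
    (phi k (Real.arctan |(num / den).im / (num / den).re|) : ℂ)) * hpow

lemma Dpow_const (k : ℕ) (hk : 2 ≤ k) (D : ℤ) (hD : 0 < D) :
    Dpow D ((k:ℝ) / 2) * Dpow D (1 / 2 - (k:ℝ)) = ((Real.sqrt D : ℝ) : ℂ)⁻¹ ^ (k - 1) := by
  have hD' : (0:ℝ) < D := by exact_mod_cast hD
  unfold Dpow
  rw [← Complex.ofReal_mul, ← Real.rpow_add hD', ← Complex.ofReal_inv, ← Complex.ofReal_pow]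
  congr 1
  rw [Real.sqrt_eq_rpow, ← Real.rpow_neg hD'.le, ← Real.rpow_natCast, ← Real.rpow_mul hD'.le]
  congr 1
  rw [Nat.cast_sub (by omega)]
  push_cast
  ring

lemma coset_equiv (q₀ : ℤ × ℤ × ℤ)
    (𝒜 : Set (ℤ × ℤ × ℤ))
    (h𝒜 : 𝒜 = {q | ∃ γ : Matrix.SpecialLinearGroup (Fin 2) ℤ, QAct q₀ γ = q})
    (R : Set (Matrix.SpecialLinearGroup (Fin 2) ℤ))
    (hR : ∀ γ : Matrix.SpecialLinearGroup (Fin 2) ℤ,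
      ∃! ρ : Matrix.SpecialLinearGroup (Fin 2) ℤ, ρ ∈ R ∧
        ∃ δ : Matrix.SpecialLinearGroup (Fin 2) ℤ, QAct q₀ δ = q₀ ∧ γ = δ * ρ) :
    ∃ e : R ≃ 𝒜, ∀ ρ : R, (e ρ : ℤ × ℤ × ℤ) = QAct q₀ ρ := by
  let f : R → 𝒜 := fun ρ => ⟨QAct q₀ ρ, by rw [h𝒜]; exact ⟨_, rfl⟩⟩
  have hf : Function.Bijective f := by
    constructor
    · intro ρ ρ' h
      have h' : QAct q₀ ρ.1 = QAct q₀ ρ'.1 := congrArg Subtype.val h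
      obtain ⟨σ, _, hu⟩ := hR ρ'.1
      have a1 := hu ρ'.1 ⟨ρ'.2, 1, QAct_one _, by simp⟩
      have a2 := hu ρ.1 ⟨ρ.2, ρ'.1 * ρ.1⁻¹, by
        rw [QAct_mul, ← h', ← QAct_mul, mul_inv_cancel, QAct_one], by simp⟩
      exact Subtype.ext (a2.trans a1.symm)
    · rintro ⟨q, hq⟩
      have hq' := hq
      rw [h𝒜] at hq'
      obtain ⟨γ, rfl⟩ := hq'
      obtain ⟨ρ, ⟨hρ, δ, hδ, hγ⟩, _⟩ := hR γ
      refine ⟨⟨ρ, hρ⟩, Subtype.ext ?_⟩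
      change QAct q₀ ρ = QAct q₀ γ
      rw [hγ, QAct_mul, hδ]
  exact ⟨Equiv.ofBijective f hf, fun _ => rfl⟩

lemma final_const (k : ℕ) (hk : 2 ≤ k) (X Y T : ℂ) :
    (-1) ^ k * (X * Y) * T = ((Nat.choose (2 * k - 2) (k - 1) : ℕ) : ℂ) * ((Real.pi : ℝ) : ℂ) *
      X * ((-1 : ℂ) ^ k * Y /
      (((Nat.choose (2 * k - 2) (k - 1) : ℝ) * Real.pi : ℝ) : ℂ) * T) := by
  have hc : ((Nat.choose (2 * k - 2) (k - 1) : ℕ) : ℂ) ≠ 0 := by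
    exact_mod_cast (Nat.choose_pos (by omega)).ne'
  have hpi : ((Real.pi : ℝ) : ℂ) ≠ 0 := by exact_mod_cast Real.pi_ne_zero
  push_cast
  generalize ((Nat.choose (2 * k - 2) (k - 1) : ℕ) : ℂ) = B at *
  generalize ((Real.pi : ℝ) : ℂ) = P at *
  field_simp

lemma summable_class (k : ℕ) (D : ℤ) (τ : ℂ) (𝒜 : Set (ℤ × ℤ × ℤ)) (hsub : 𝒜 ⊆ QD D)
    (h : Summable (fun q : QD D => Fsummand k D τ (q : ℤ × ℤ × ℤ))) :
    Summable (fun q : 𝒜 => Fsummand k D τ (q : ℤ × ℤ × ℤ)) := by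
  generalize Fsummand k D τ = f at *
  have h0 := h.comp_injective (i := Set.inclusion hsub) (Set.inclusion_injective hsub)
  exact h0

theorem stmt17 (k : ℕ) (hk : 2 ≤ k) (D : ℤ) (hD : 0 < D)
    (hD4 : D % 4 = 0 ∨ D % 4 = 1) (hDsq : ¬∃ m : ℤ, m ^ 2 = D)
    (q₀ : ℤ × ℤ × ℤ) (hq₀ : q₀ ∈ QD D)
    (𝒜 : Set (ℤ × ℤ × ℤ))
    (h𝒜 : 𝒜 = {q | ∃ γ : Matrix.SpecialLinearGroup (Fin 2) ℤ, QAct q₀ γ = q})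
    (R : Set (Matrix.SpecialLinearGroup (Fin 2) ℤ))
    (hR : ∀ γ : Matrix.SpecialLinearGroup (Fin 2) ℤ,
      ∃! ρ : Matrix.SpecialLinearGroup (Fin 2) ℤ, ρ ∈ R ∧
        ∃ δ : Matrix.SpecialLinearGroup (Fin 2) ℤ, QAct q₀ δ = q₀ ∧ γ = δ * ρ)
    (τ : ℂ) (hτ : 0 < τ.im) :
    Summable (fun ρ : R =>
      jfac (AQ D q₀ * toR (ρ : Matrix.SpecialLinearGroup (Fin 2) ℤ)) τ ^ (2 * k - 2) *
        phiHat k (moeb (AQ D q₀ * toR (ρ : Matrix.SpecialLinearGroup (Fin 2) ℤ)) τ)) ∧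
    ∑' ρ : R,
        jfac (AQ D q₀ * toR (ρ : Matrix.SpecialLinearGroup (Fin 2) ℤ)) τ ^ (2 * k - 2) *
          phiHat k (moeb (AQ D q₀ * toR (ρ : Matrix.SpecialLinearGroup (Fin 2) ℤ)) τ)
      = ((Nat.choose (2 * k - 2) (k - 1) : ℕ) : ℂ) * ((Real.pi : ℝ) : ℂ) *
          Dpow D ((k : ℝ) / 2) * FA k D 𝒜 τ := by
  have hsub : 𝒜 ⊆ QD D := by
    rw [h𝒜]
    rintro _ ⟨γ, rfl⟩
    exact QAct_mem D q₀ hq₀ γ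
  have hsA : Summable (fun q : 𝒜 => Fsummand k D τ (q : ℤ × ℤ × ℤ)) :=
    summable_class k D τ 𝒜 hsub (summable_Fsummand k hk D hD hDsq τ hτ)
  obtain ⟨e, he⟩ := coset_equiv q₀ 𝒜 h𝒜 R hR
  have hterm : (fun ρ : R =>
      jfac (AQ D q₀ * toR (ρ : Matrix.SpecialLinearGroup (Fin 2) ℤ)) τ ^ (2 * k - 2) *
        phiHat k (moeb (AQ D q₀ * toR (ρ : Matrix.SpecialLinearGroup (Fin 2) ℤ)) τ)) =
      fun ρ : R => ((-1) ^ k * ((Real.sqrt D : ℝ) : ℂ)⁻¹ ^ (k - 1)) *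
        Fsummand k D τ (e ρ : ℤ × ℤ × ℤ) := by
    funext ρ
    rw [he]
    exact main_term k hk D hD hDsq q₀ hq₀ ρ.1 τ hτ
  rw [hterm]
  refine ⟨(e.summable_iff.2 hsA).mul_left _, ?_⟩
  rw [tsum_mul_left, e.tsum_eq (fun q : 𝒜 => Fsummand k D τ (q : ℤ × ℤ × ℤ))]
  unfold FA
  rw [← Dpow_const k hk D hD]
  exact final_const k hk _ _ _
end
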